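/- arXiv:2203.06268 — 2 statements merged into one kernel-verified Lean document; each statement's English description precedes it below -/
import Mathlib

section
/- For all sufficiently large n, C₀(n) ≥ exp(−n·α^{1/4}) · n! · (∏_{p prime, p > 2} (p−1)^{2(1−1/p)} / (p·(p−2)^{1−2/p}))^n. -/
open Real

/-- `k = k(n) = 2^{-5} (log n / log log n)^{1/2}`. -/
noncomputable def kp (n : ℕ) : ℝ :=
  (2 : ℝ) ^ (-5 : ℤ) * Real.sqrt (Real.log n / Real.log (Real.log n))

/-- `α = α(n) = exp(−k log k)`. -/
noncomputable def ap (n : ℕ) : ℝ := Real.exp (-(kp n * Real.log (kp n)))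

/-- `C₀(n)`: the number of bijections `f` from the first `n` odd positive integers
`{1, 3, …, 2n−1}` to `{1, …, n}` with `gcd(j, f(j)) = 1` for all `j`. -/
noncomputable def coprimeOddBijCount (n : ℕ) : ℕ :=
  Nat.card {f : Fin n ≃ Fin n // ∀ j : Fin n, Nat.gcd (2 * j.1 + 1) ((f j).1 + 1) = 1}

/-- The constant `∏_{p > 2 prime} (p−1)^{2(1−1/p)} / (p·(p−2)^{1−2/p})` (real powers). -/
noncomputable def coprimeConstOdd : ℝ :=
  ∏' p : {p : Nat.Primes // 2 < (p : ℕ)},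
    (((p.1 : ℕ) : ℝ) - 1) ^ (2 * (1 - 1 / ((p.1 : ℕ) : ℝ))) /
      (((p.1 : ℕ) : ℝ) * (((p.1 : ℕ) : ℝ) - 2) ^ (1 - 2 / ((p.1 : ℕ) : ℝ)))

theorem coeff_one_ne_zero_of_stable (P : Polynomial ℂ) (hdeg : P.natDegree ≠ 0)
    (hP : ∀ t : ℂ, 0 ≤ t.im → P.eval t ≠ 0) : P.coeff 1 ≠ 0 := by
  intro h1
  have hsp : P.Splits := IsAlgClosed.splits P
  have h0 : P.eval 0 ≠ 0 := hP 0 (by simp)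
  have key := hsp.eval_derivative_div_eval_of_ne_zero h0
  have hd : P.derivative.eval 0 = 0 := by
    rw [← Polynomial.coeff_zero_eq_eval_zero, Polynomial.coeff_derivative]
    simp [h1]
  rw [hd, zero_div] at key
  have hroot : ∀ z ∈ P.roots, (1 / (0 - z) : ℂ).im < 0 := by
    intro z hz
    have hz' : P.eval z = 0 := (Polynomial.mem_roots'.1 hz).2
    have him : z.im < 0 := by
      by_contra! h
      exact hP z h hz'
    have hz0 : z ≠ 0 := by rintro rfl; simp at him
    have : (1 : ℂ) / (0 - z) = -z⁻¹ := by
      field_simp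
      ring
    rw [this, Complex.neg_im, Complex.inv_im, neg_div, neg_neg]
    exact div_neg_of_neg_of_pos him (Complex.normSq_pos.2 hz0)
  have hsum : ∀ s : Multiset ℂ, (∀ z ∈ s, (1 / (0 - z) : ℂ).im < 0) →
      (s.map fun z => 1 / (0 - z)).sum.im ≤ 0 ∧
        (s ≠ 0 → (s.map fun z => 1 / (0 - z)).sum.im < 0) := by
    intro s
    induction s using Multiset.induction with
    | empty => simp
    | cons a s ih =>
      intro h
      have ha := h a (by simp)
      have := (ih fun z hz => h z (by simp [hz])).1
      simp only [Multiset.map_cons, Multiset.sum_cons, Complex.add_im]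
      exact ⟨by linarith, fun _ => by linarith⟩
  have := (hsum P.roots hroot).2 (hsp.roots_ne_zero hdeg)
  rw [← key] at this
  simp at this

theorem eval_le_eval_zero_mul_exp (R : Polynomial ℝ) (hR : R.Splits)
    (hnn : ∀ i, 0 ≤ R.coeff i) (h0 : R.coeff 0 ≠ 0) (t : ℝ) (ht : 0 ≤ t) :
    R.eval t ≤ R.coeff 0 * Real.exp (t * (R.coeff 1 / R.coeff 0)) := by
  have h0e : R.eval 0 ≠ 0 := by rwa [← Polynomial.coeff_zero_eq_eval_zero]
  have h0p : 0 < R.coeff 0 := lt_of_le_of_ne (hnn 0) (Ne.symm h0)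
  have hneg : ∀ r ∈ R.roots, r < 0 := by
    intro r hr
    by_contra! h
    have hz : R.eval r = 0 := (Polynomial.mem_roots'.1 hr).2
    rw [Polynomial.eval_eq_sum_range] at hz
    have : R.coeff 0 * r ^ 0 ≤ ∑ i ∈ Finset.range (R.natDegree + 1), R.coeff i * r ^ i :=
      Finset.single_le_sum (f := fun i => R.coeff i * r ^ i)
        (fun i _ => mul_nonneg (hnn i) (pow_nonneg h i)) (by simp)
    simp at this
    linarith
  have key := hR.eval_derivative_div_eval_of_ne_zero h0e
  rw [← Polynomial.coeff_zero_eq_eval_zero, ← Polynomial.coeff_zero_eq_eval_zero,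
    Polynomial.coeff_derivative] at key
  simp only [Nat.cast_zero, zero_add, mul_one] at key
  have e1 := hR.eval_eq_prod_roots t
  have e0 := hR.eval_eq_prod_roots 0
  rw [← Polynomial.coeff_zero_eq_eval_zero] at e0
  have hmul : ∀ s : Multiset ℝ, (∀ r ∈ s, r < 0) →
      0 < (s.map (0 - ·)).prod ∧ 0 ≤ (s.map (t - ·)).prod ∧
      (s.map (t - ·)).prod ≤
        (s.map (0 - ·)).prod * Real.exp (t * (s.map fun z => 1 / (0 - z)).sum) := by
    intro s
    induction s using Multiset.induction with
    | empty => simp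
    | cons a s ih =>
      intro h
      have ha : a < 0 := h a (by simp)
      obtain ⟨p1, p2, p3⟩ := ih fun r hr => h r (by simp [hr])
      simp only [Multiset.map_cons, Multiset.prod_cons, Multiset.sum_cons]
      refine ⟨mul_pos (by linarith) p1, mul_nonneg (by linarith) p2, ?_⟩
      rw [mul_add, Real.exp_add]
      have h1 : t - a ≤ (0 - a) * Real.exp (t * (1 / (0 - a))) := by
        have := Real.add_one_le_exp (t * (1 / (0 - a)))
        calc t - a = (0 - a) * (t * (1 / (0 - a)) + 1) := by
              have : (0 - a) ≠ 0 := by linarith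
              field_simp
              ring
          _ ≤ _ := mul_le_mul_of_nonneg_left this (by linarith)
      calc (t - a) * (s.map (t - ·)).prod
          ≤ ((0 - a) * Real.exp (t * (1 / (0 - a)))) * ((s.map (0 - ·)).prod *
            Real.exp (t * (s.map fun z => 1 / (0 - z)).sum)) :=
            mul_le_mul h1 p3 p2 (mul_nonneg (by linarith) (Real.exp_pos _).le)
        _ = _ := by ring
  obtain ⟨q1, q2, q3⟩ := hmul R.roots hneg
  have hlead : 0 < R.leadingCoeff := by
    by_contra! h
    nlinarith
  rw [key, e1]
  calc _ ≤ R.leadingCoeff * _ := mul_le_mul_of_nonneg_left q3 hlead.le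
    _ = _ := by rw [e0]; ring

theorem splits_of_no_root_upper (R : Polynomial ℝ)
    (h : ∀ t : ℂ, 0 < t.im → Polynomial.aeval t R ≠ 0) : R.Splits := by
  refine Polynomial.Splits.of_splits_map Complex.ofRealHom (IsAlgClosed.splits _) ?_
  intro a ha
  have hz := (Polynomial.mem_roots'.1 ha).2
  have hz' : Polynomial.aeval a R = 0 := by
    rw [Polynomial.IsRoot.def, Polynomial.eval_map] at hz
    exact hz
  have h1 : a.im ≤ 0 := by
    by_contra! hh
    exact h a hh hz'
  have h2 : 0 ≤ a.im := by
    by_contra! hh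
    refine h (starRingEnd ℂ a) (by simpa using hh) ?_
    rw [Polynomial.aeval_conj, hz', map_zero]
  exact ⟨a.re, by apply Complex.ext <;> simp; linarith⟩

theorem coeff_one_lower (R : Polynomial ℝ) (hR : R.Splits) (hnn : ∀ i, 0 ≤ R.coeff i)
    (C : ℝ) (hC : ∀ t : ℝ, 0 < t → C * t ≤ R.eval t) : C * Real.exp (-1) ≤ R.coeff 1 := by
  have e1 : Real.exp (-1) ≤ 1 := by simp
  have e0 := Real.exp_pos (-1)
  rcases le_or_gt C 0 with hC0 | hC0
  · exact (mul_nonpos_of_nonpos_of_nonneg hC0 e0.le).trans (hnn 1)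
  by_cases h0 : R.coeff 0 = 0
  · have hX : R = Polynomial.X * R.divX := by
      conv_lhs => rw [← Polynomial.X_mul_divX_add R]
      simp [h0]
    have h1 : ∀ t : ℝ, 0 < t → C ≤ R.divX.eval t := by
      intro t ht
      have := hC t ht
      rw [hX, Polynomial.eval_mul, Polynomial.eval_X] at this
      nlinarith
    have hlim : Filter.Tendsto (fun t => R.divX.eval t) (nhdsWithin 0 (Set.Ioi 0))
        (nhds (R.divX.eval 0)) :=
      (R.divX.continuous.tendsto 0).mono_left nhdsWithin_le_nhds
    have := ge_of_tendsto hlim (by filter_upwards [self_mem_nhdsWithin] with t ht using h1 t ht)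
    rw [← Polynomial.coeff_zero_eq_eval_zero, Polynomial.coeff_divX] at this
    simp at this
    nlinarith
  · have h0p : 0 < R.coeff 0 := lt_of_le_of_ne (hnn 0) (Ne.symm h0)
    rcases (hnn 1).eq_or_lt with h1 | h1
    · have := eval_le_eval_zero_mul_exp R hR hnn h0 (2 * R.coeff 0 / C) (by positivity)
      rw [← h1] at this
      simp at this
      have h2 := hC (2 * R.coeff 0 / C) (by positivity)
      have : C * (2 * R.coeff 0 / C) = 2 * R.coeff 0 := by field_simp
      linarith
    · have h2 := eval_le_eval_zero_mul_exp R hR hnn h0 (R.coeff 0 / R.coeff 1) (by positivity)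
      have h3 := hC (R.coeff 0 / R.coeff 1) (by positivity)
      have e : R.coeff 0 / R.coeff 1 * (R.coeff 1 / R.coeff 0) = 1 := by field_simp
      rw [e] at h2
      have h4 : C * (R.coeff 0 / R.coeff 1) ≤ R.coeff 0 * Real.exp 1 := h3.trans h2
      have h5 : C ≤ R.coeff 1 * Real.exp 1 := by
        have : C * (R.coeff 0 / R.coeff 1) = R.coeff 0 * (C / R.coeff 1) := by ring
        rw [this] at h4
        have := le_of_mul_le_mul_left h4 h0p
        rw [div_le_iff₀ h1] at this
        linarith
      calc C * Real.exp (-1) ≤ (R.coeff 1 * Real.exp 1) * Real.exp (-1) :=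
            mul_le_mul_of_nonneg_right h5 e0.le
        _ = R.coeff 1 := by rw [mul_assoc, ← Real.exp_add]; simp

theorem aeval_cons_eq_eval_map {n : ℕ} (p : MvPolynomial (Fin (n + 1)) ℝ) (z : Fin n → ℂ) (t : ℂ) :
    MvPolynomial.aeval (Fin.cons t z : Fin (n + 1) → ℂ) p =
      ((MvPolynomial.finSuccEquiv ℝ n p).map
        (MvPolynomial.aeval z : MvPolynomial (Fin n) ℝ →ₐ[ℝ] ℂ).toRingHom).eval t := by
  induction p using MvPolynomial.induction_on with
  | C a => simp [MvPolynomial.finSuccEquiv_apply]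
  | add p q hp hq => simp [hp, hq]
  | mul_X p i hp =>
    rw [map_mul, hp, map_mul, Polynomial.map_mul, Polynomial.eval_mul]
    congr 1
    refine Fin.cases ?_ (fun j => ?_) i
    · simp [MvPolynomial.finSuccEquiv_X_zero]
    · simp [MvPolynomial.finSuccEquiv_X_succ]

/-- Strict stability: no zeros in the closed upper half-space except possibly at real points. -/
def StrictlyStable {n : ℕ} (p : MvPolynomial (Fin n) ℝ) : Prop :=
  ∀ z : Fin n → ℂ, (∀ i, 0 ≤ (z i).im) → (∃ i, 0 < (z i).im) → MvPolynomial.aeval z p ≠ 0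

theorem StrictlyStable.coeff_one {n : ℕ} {p : MvPolynomial (Fin (n + 1)) ℝ}
    (hp : StrictlyStable p) (hhom : p.IsHomogeneous (n + 1)) :
    StrictlyStable ((MvPolynomial.finSuccEquiv ℝ n p).coeff 1) := by
  set F := MvPolynomial.finSuccEquiv ℝ n p with hF
  -- the coefficient of `t ^ (n + 1)` is a nonzero constant
  have hhom' : ∀ i j, i + j = n + 1 → (F.coeff i).IsHomogeneous j := fun i j h =>
    hhom.finSuccEquiv_coeff_isHomogeneous i j h
  have hdegF : F.natDegree < n + 2 := by
    have h1 : F.natDegree = _ := MvPolynomial.natDegree_finSuccEquiv p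
    have h2 := MvPolynomial.degreeOf_le_totalDegree p 0
    have h3 := hhom.totalDegree_le
    omega
  have htop : ∀ z : Fin n → ℂ, MvPolynomial.aeval z (F.coeff (n + 1)) ≠ 0 := by
    have h0 : MvPolynomial.aeval (0 : Fin n → ℂ) (F.coeff (n + 1)) ≠ 0 := by
      intro hz
      refine hp (Fin.cons Complex.I 0) ?_ ⟨0, by simp⟩ ?_
      · intro i
        refine Fin.cases ?_ (fun j => ?_) i <;> simp
      · rw [aeval_cons_eq_eval_map, Polynomial.eval_map, Polynomial.eval₂_eq_sum_range' _ hdegF]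
        refine Finset.sum_eq_zero fun i hi => ?_
        rw [Finset.mem_range] at hi
        rcases Nat.lt_succ_iff_lt_or_eq.1 hi with h | h
        · have : (F.coeff i).coeff 0 = 0 :=
            (hhom' i (n + 1 - i) (by omega)).coeff_eq_zero (by simp; omega)
          have h2 : MvPolynomial.aeval (0 : Fin n → ℂ) (F.coeff i) = 0 := by
            rw [MvPolynomial.aeval_zero, MvPolynomial.constantCoeff_eq, this, map_zero]
          simp [h2]
        · subst h
          simp [hz]
    intro z
    have hc := (MvPolynomial.totalDegree_eq_zero_iff_eq_C (p := F.coeff (n + 1))).1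
      (Nat.le_zero.1 (hhom' (n + 1) 0 rfl).totalDegree_le)
    rw [hc] at h0 ⊢
    simpa using h0
  intro z hz1 hz2
  set P := F.map (MvPolynomial.aeval z : MvPolynomial (Fin n) ℝ →ₐ[ℝ] ℂ).toRingHom with hPdef
  have hP : P.coeff 1 ≠ 0 := by
    refine coeff_one_ne_zero_of_stable P ?_ ?_
    · have : n + 1 ≤ P.natDegree := Polynomial.le_natDegree_of_ne_zero (by
        rw [hPdef, Polynomial.coeff_map]; exact htop z)
      omega
    · intro t ht
      rw [hPdef, ← aeval_cons_eq_eval_map]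
      obtain ⟨i, hi⟩ := hz2
      refine hp _ (fun j => ?_) ⟨i.succ, by simpa using hi⟩
      refine Fin.cases ?_ (fun k => ?_) j
      · simpa using ht
      · simpa using hz1 k
  rw [hPdef, Polynomial.coeff_map] at hP
  exact hP

/-- Gurvits' capacity bound for the multilinear coefficient of a stable polynomial. -/
theorem StrictlyStable.coeff_lower : ∀ (n : ℕ) (p : MvPolynomial (Fin n) ℝ),
    StrictlyStable p → p.IsHomogeneous n → (∀ m, 0 ≤ p.coeff m) → ∀ C : ℝ,
    (∀ x : Fin n → ℝ, (∀ i, 0 < x i) → C * ∏ i, x i ≤ MvPolynomial.eval x p) →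
    C * Real.exp (-(n : ℝ)) ≤ p.coeff (Finsupp.equivFunOnFinite.symm fun _ => 1) := by
  intro n
  induction n with
  | zero =>
    intro p _ _ _ C hC
    have h := hC (fun i => i.elim0) (fun i => i.elim0)
    rw [MvPolynomial.eq_C_of_isEmpty p] at h ⊢
    have : (Finsupp.equivFunOnFinite.symm fun _ => 1 : Fin 0 →₀ ℕ) = 0 := Subsingleton.elim _ _
    rw [this]
    simpa using h
  | succ n ih =>
    intro p hst hhom hnn C hC
    set F := MvPolynomial.finSuccEquiv ℝ n p with hF
    have hcoef : ∀ i m, 0 ≤ (F.coeff i).coeff m := fun i m => by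
      rw [hF, MvPolynomial.finSuccEquiv_coeff_coeff]; exact hnn _
    have hev : ∀ i (x : Fin n → ℝ), (∀ j, 0 < x j) → 0 ≤ MvPolynomial.eval x (F.coeff i) := by
      intro i x hx
      rw [MvPolynomial.eval_eq]
      exact Finset.sum_nonneg fun d _ => mul_nonneg (hcoef _ _)
        (Finset.prod_nonneg fun j _ => pow_nonneg (hx j).le _)
    have h := ih (F.coeff 1) (hst.coeff_one hhom)
      (hhom.finSuccEquiv_coeff_isHomogeneous 1 n (by omega)) (hcoef 1) (C * Real.exp (-1)) ?_
    · have e : (Finsupp.equivFunOnFinite.symm fun _ => 1 : Fin (n + 1) →₀ ℕ) =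
          Finsupp.cons 1 (Finsupp.equivFunOnFinite.symm fun _ => 1) := by
        ext i
        refine Fin.cases ?_ (fun j => ?_) i <;> simp
      rw [e, ← MvPolynomial.finSuccEquiv_coeff_coeff]
      refine le_trans (le_of_eq ?_) h
      rw [mul_assoc, ← Real.exp_add]
      push_cast
      ring_nf
    · intro x hx
      set R := F.map (MvPolynomial.eval x) with hR
      have hRc : ∀ i, R.coeff i = MvPolynomial.eval x (F.coeff i) := fun i => by
        rw [hR, Polynomial.coeff_map]
      have hspl : R.Splits := by
        refine splits_of_no_root_upper R fun t ht => ?_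
        have : Polynomial.aeval t R =
            MvPolynomial.aeval (Fin.cons t (fun i => (x i : ℂ)) : Fin (n + 1) → ℂ) p := by
          rw [aeval_cons_eq_eval_map, Polynomial.aeval_def, ← Polynomial.eval_map, hR,
            Polynomial.map_map]
          congr 2
          refine MvPolynomial.ringHom_ext (fun r => ?_) (fun i => ?_) <;> simp
        rw [this]
        refine hst _ (fun j => ?_) ⟨0, by simpa using ht⟩
        refine Fin.cases ?_ (fun k => ?_) j
        · simpa using ht.le
        · simp
      have := coeff_one_lower R hspl (fun i => by rw [hRc]; exact hev i x hx) (C * ∏ i, x i) ?_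
      · rw [hRc] at this
        linarith
      · intro t ht
        have h2 := hC (Fin.cons t x) (fun j => by
          refine Fin.cases ?_ (fun k => ?_) j
          · simpa using ht
          · simpa using hx k)
        rw [MvPolynomial.eval_eq_eval_mv_eval', Fin.prod_univ_succ] at h2
        simp only [Fin.cons_zero, Fin.cons_succ] at h2
        linarith

/-- The product of the row forms of a matrix. -/
noncomputable def rowProduct {n : ℕ} (B : Fin n → Fin n → ℝ) : MvPolynomial (Fin n) ℝ :=
  ∏ i, ∑ j, MvPolynomial.monomial (Finsupp.single j 1) (B i j)

theorem rowProduct_coeff_one {n : ℕ} (B : Fin n → Fin n → ℝ) :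
    (rowProduct B).coeff (Finsupp.equivFunOnFinite.symm fun _ => 1) =
      ∑ σ : Equiv.Perm (Fin n), ∏ i, B i (σ i) := by
  classical
  rw [rowProduct, Finset.prod_univ_sum, MvPolynomial.coeff_sum]
  have hterm : ∀ f : Fin n → Fin n,
      MvPolynomial.coeff (Finsupp.equivFunOnFinite.symm fun _ => 1)
        (∏ i, MvPolynomial.monomial (Finsupp.single (f i) 1) (B i (f i))) =
      if Function.Bijective f then ∏ i, B i (f i) else 0 := by
    intro f
    have e : (∏ i, MvPolynomial.monomial (Finsupp.single (f i) 1) (B i (f i))) =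
        MvPolynomial.monomial (∑ i, Finsupp.single (f i) 1) (∏ i, B i (f i)) := by
      induction (Finset.univ : Finset (Fin n)) using Finset.induction_on with
      | empty => simp
      | insert a s ha ih =>
        rw [Finset.prod_insert ha, Finset.prod_insert ha, Finset.sum_insert ha, ih,
          MvPolynomial.monomial_mul]
    rw [e, MvPolynomial.coeff_monomial]
    refine if_congr ?_ rfl rfl
    constructor
    · intro h
      refine Finite.surjective_iff_bijective.1 fun j => ?_
      by_contra! hj
      have := DFunLike.congr_fun h j
      rw [Finsupp.finsetSum_apply, Finset.sum_eq_zero fun i _ => by simp [hj i]] at this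
      simp at this
    · intro h
      rw [h.sum_comp (fun j => Finsupp.single j 1)]
      ext j
      simp [Finsupp.finsetSum_apply, Finsupp.single_apply]
  simp only [hterm]
  rw [Fintype.piFinset_univ, ← Finset.sum_filter]
  symm
  refine Finset.sum_bij (fun σ _ => (σ : Fin n → Fin n)) ?_ ?_ ?_ ?_
  · intro σ _
    exact Finset.mem_filter.2 ⟨Finset.mem_univ _, σ.bijective⟩
  · intro σ _ τ _ h
    exact DFunLike.coe_injective h
  · intro f hf
    exact ⟨Equiv.ofBijective f (by simpa using hf), by simp, rfl⟩
  · intro σ _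
    rfl

theorem permanent_lower_of_pos {n : ℕ} (B : Fin n → Fin n → ℝ) (hpos : ∀ i j, 0 < B i j)
    (hrow : ∀ i, ∑ j, B i j = 1) (hcol : ∀ j, ∑ i, B i j = 1) :
    Real.exp (-(n : ℝ)) ≤ ∑ σ : Equiv.Perm (Fin n), ∏ i, B i (σ i) := by
  rw [← rowProduct_coeff_one, ← one_mul (Real.exp _)]
  refine StrictlyStable.coeff_lower n (rowProduct B) ?_ ?_ ?_ 1 ?_
  · intro z hz1 ⟨k, hk⟩
    rw [rowProduct, map_prod, Finset.prod_ne_zero_iff]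
    intro i _ h
    have h2 := congrArg Complex.im h
    simp only [map_sum, MvPolynomial.aeval_monomial, Complex.im_sum] at h2
    simp at h2
    have : 0 < ∑ j, B i j * (z j).im :=
      Finset.sum_pos' (fun j _ => mul_nonneg (hpos i j).le (hz1 j))
        ⟨k, Finset.mem_univ _, mul_pos (hpos i k) hk⟩
    linarith
  · have := MvPolynomial.IsHomogeneous.prod (Finset.univ : Finset (Fin n))
      (fun i => ∑ j, MvPolynomial.monomial (Finsupp.single j 1) (B i j)) (fun _ => 1)
      (fun i _ => MvPolynomial.IsHomogeneous.sum _ _ _ fun j _ =>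
        MvPolynomial.isHomogeneous_monomial _ (by simp))
    simpa [rowProduct] using this
  · have hmul : ∀ p q : MvPolynomial (Fin n) ℝ, (∀ m, 0 ≤ p.coeff m) → (∀ m, 0 ≤ q.coeff m) →
        ∀ m, 0 ≤ (p * q).coeff m := by
      intro p q hp hq m
      classical
      rw [MvPolynomial.coeff_mul]
      exact Finset.sum_nonneg fun x _ => mul_nonneg (hp _) (hq _)
    rw [rowProduct]
    refine Finset.prod_induction _ (fun p : MvPolynomial (Fin n) ℝ => ∀ m, 0 ≤ p.coeff m)
      hmul ?_ ?_
    · intro m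
      classical
      rw [MvPolynomial.coeff_one]
      split_ifs <;> simp
    · intro i _ m
      classical
      rw [MvPolynomial.coeff_sum]
      refine Finset.sum_nonneg fun j _ => ?_
      rw [MvPolynomial.coeff_monomial]
      split_ifs
      · exact (hpos i j).le
      · simp
  · intro x hx
    have h1 : ∀ i, ∏ j, x j ^ B i j ≤ ∑ j, B i j * x j := fun i =>
      Real.geom_mean_le_arith_mean_weighted _ _ _ (fun j _ => (hpos i j).le) (hrow i)
        (fun j _ => (hx j).le)
    have h2 : ∏ j, x j = ∏ i, ∏ j, x j ^ B i j := by
      rw [Finset.prod_comm]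
      refine Finset.prod_congr rfl fun j _ => ?_
      rw [← Real.rpow_sum_of_pos (hx j), hcol j, Real.rpow_one]
    rw [one_mul, h2, rowProduct, map_prod]
    refine Finset.prod_le_prod
      (fun i _ => Finset.prod_nonneg fun j _ => Real.rpow_nonneg (hx j).le _) fun i _ => ?_
    refine (h1 i).trans (le_of_eq ?_)
    simp [MvPolynomial.eval_monomial]

/-- A weak form of van der Waerden's bound for the permanent of a doubly stochastic matrix. -/
theorem permanent_lower {n : ℕ} (B : Fin n → Fin n → ℝ) (hnn : ∀ i j, 0 ≤ B i j)
    (hrow : ∀ i, ∑ j, B i j = 1) (hcol : ∀ j, ∑ i, B i j = 1) :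
    Real.exp (-(n : ℝ)) ≤ ∑ σ : Equiv.Perm (Fin n), ∏ i, B i (σ i) := by
  rcases Nat.eq_zero_or_pos n with rfl | hn
  · simp
  have hn' : (0 : ℝ) < n := by exact_mod_cast hn
  have hcont : Continuous fun s : ℝ =>
      ∑ σ : Equiv.Perm (Fin n), ∏ i, ((1 - s) * B i (σ i) + s * (1 / n)) := by fun_prop
  have hlim := (hcont.tendsto 0).mono_left (nhdsWithin_le_nhds (s := Set.Ioi 0))
  simp only [sub_zero, one_mul, zero_mul, add_zero] at hlim
  refine ge_of_tendsto hlim ?_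
  have : Set.Ioo (0 : ℝ) 1 ∈ nhdsWithin (0 : ℝ) (Set.Ioi 0) := Ioo_mem_nhdsGT (by norm_num)
  filter_upwards [this] with s hs
  refine permanent_lower_of_pos (fun i j => (1 - s) * B i j + s * (1 / n)) ?_ ?_ ?_
  · intro i j
    have h1 : 0 ≤ (1 - s) * B i j := mul_nonneg (by linarith [hs.2]) (hnn i j)
    have h2 : 0 < s * (1 / (n : ℝ)) := mul_pos hs.1 (by positivity)
    linarith
  · intro i
    rw [Finset.sum_add_distrib, ← Finset.mul_sum, hrow]
    simp
    field_simp
    ring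
  · intro j
    rw [Finset.sum_add_distrib, ← Finset.mul_sum, hcol]
    simp
    field_simp
    ring

/-- A matrix with prescribed column sums (of total zero) and zero row sums, supported on pairs
with common neighbours. -/
theorem exists_correction {n : ℕ} (s : Fin n → Fin n → ℝ) (hs : ∀ i j, s i j = 0 ∨ s i j = 1)
    (c : ℝ) (hc : 0 < c) (hcn : ∀ j j', c ≤ ∑ i, s i j * s i j')
    (f : Fin n → ℝ) (hf : ∑ j, f j = 0) (M : ℝ) (hM : ∀ j, |f j| ≤ M) :
    ∃ F : Fin n → Fin n → ℝ, (∀ i, ∑ j, F i j = 0) ∧ (∀ j, ∑ i, F i j = f j) ∧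
      ∀ i j, |F i j| ≤ s i j * (2 * M / c) := by
  rcases Nat.eq_zero_or_pos n with rfl | hn
  · exact ⟨fun i => i.elim0, fun i => i.elim0, fun i => i.elim0, fun i => i.elim0⟩
  have hn' : (0 : ℝ) < n := by exact_mod_cast hn
  have hs0 : ∀ i j, 0 ≤ s i j := fun i j => by rcases hs i j with h | h <;> simp [h]
  have hs1 : ∀ i j, s i j ≤ 1 := fun i j => by rcases hs i j with h | h <;> simp [h]
  set N : Fin n → Fin n → ℝ := fun j j' => ∑ i, s i j * s i j' with hN
  have hNpos : ∀ j j', 0 < N j j' := fun j j' => hc.trans_le (hcn j j')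
  have hNsymm : ∀ j j', N j j' = N j' j := fun j j' => by
    simp only [hN]; exact Finset.sum_congr rfl fun i _ => mul_comm _ _
  refine ⟨fun i j => ∑ j', (f j - f j') / n * (s i j * s i j' / N j j'), ?_, ?_, ?_⟩
  · intro i
    have h : ∑ j, ∑ j', (f j - f j') / n * (s i j * s i j' / N j j') =
        -∑ j, ∑ j', (f j - f j') / n * (s i j * s i j' / N j j') := by
      conv_lhs => rw [Finset.sum_comm]
      rw [← Finset.sum_neg_distrib]
      refine Finset.sum_congr rfl fun j _ => ?_
      rw [← Finset.sum_neg_distrib]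
      refine Finset.sum_congr rfl fun j' _ => ?_
      rw [hNsymm j' j]
      ring
    linarith
  · intro j
    rw [Finset.sum_comm]
    have h : ∀ j', ∑ i, (f j - f j') / n * (s i j * s i j' / N j j') = (f j - f j') / n := by
      intro j'
      rw [← Finset.mul_sum, ← Finset.sum_div]
      have : (∑ i, s i j * s i j') / N j j' = 1 := div_self (hNpos j j').ne'
      rw [this, mul_one]
    simp only [h]
    rw [← Finset.sum_div, Finset.sum_sub_distrib, hf]
    simp
    field_simp
  · intro i j
    have hM0 : 0 ≤ M := (abs_nonneg _).trans (hM j)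
    calc |∑ j', (f j - f j') / n * (s i j * s i j' / N j j')|
        ≤ ∑ j' : Fin n, |(f j - f j') / n * (s i j * s i j' / N j j')| :=
          Finset.abs_sum_le_sum_abs _ _
      _ ≤ ∑ j' : Fin n, (2 * M) / n * (s i j / c) := by
          refine Finset.sum_le_sum fun j' _ => ?_
          rw [abs_mul, abs_div, abs_of_pos hn',
            abs_of_nonneg (div_nonneg (mul_nonneg (hs0 i j) (hs0 i j')) (hNpos j j').le)]
          have h1 : |f j - f j'| ≤ 2 * M := by
            have := abs_sub (f j) (f j')
            linarith [hM j, hM j']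
          have h2 : s i j * s i j' ≤ s i j := mul_le_of_le_one_right (hs0 i j) (hs1 i j')
          have h3 := hcn j j'
          have h4 := hs0 i j
          have h5 : s i j * s i j' / N j j' ≤ s i j / c := div_le_div₀ h4 h2 hc h3
          have h6 := div_nonneg (mul_nonneg h4 (hs0 i j')) (hNpos j j').le
          exact mul_le_mul (div_le_div_of_nonneg_right h1 hn'.le) h5 h6 (by positivity)
      _ = s i j * (2 * M / c) := by
          simp
          field_simp

theorem permanent_lower_of_approx {n : ℕ} (B : Fin n → Fin n → ℝ) (hnn : ∀ i j, 0 ≤ B i j)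
    (δ β c η : ℝ) (hδ0 : 0 ≤ δ) (hδ : δ ≤ 1 / 2) (hβ : 0 < β) (hc : 0 < c) (hη1 : η ≤ 1)
    (hη : 12 * δ ≤ η * (β * c))
    (s : Fin n → Fin n → ℝ) (hs : ∀ i j, s i j = 0 ∨ s i j = 1)
    (hB : ∀ i j, β * s i j ≤ B i j)
    (hrow : ∀ i, |∑ j, B i j - 1| ≤ δ) (hcol : ∀ j, |∑ i, B i j - 1| ≤ δ)
    (hcn : ∀ j j', c ≤ ∑ i, s i j * s i j') :
    Real.exp (-(n : ℝ)) ≤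
      ((1 + η) / (1 - δ)) ^ n * ∑ σ : Equiv.Perm (Fin n), ∏ i, B i (σ i) := by
  have hs0 : ∀ i j, 0 ≤ s i j := fun i j => by rcases hs i j with h | h <;> simp [h]
  have hη0 : 0 ≤ η := by
    by_contra! h
    have : 0 < β * c := by positivity
    nlinarith
  set r : Fin n → ℝ := fun i => ∑ j, B i j with hr
  have hr1 : ∀ i, 1 - δ ≤ r i := fun i => by linarith [(abs_le.1 (hrow i)).1]
  have hr2 : ∀ i, r i ≤ 1 + δ := fun i => by linarith [(abs_le.1 (hrow i)).2]
  have hr0 : ∀ i, 0 < r i := fun i => by linarith [hr1 i]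
  set f : Fin n → ℝ := fun j => 1 - ∑ i, B i j / r i with hf
  have hB1row : ∀ i, ∑ j, B i j / r i = 1 := fun i => by
    rw [← Finset.sum_div]; exact div_self (hr0 i).ne'
  have hfsum : ∑ j, f j = 0 := by
    simp only [hf, Finset.sum_sub_distrib]
    rw [Finset.sum_comm]
    simp [hB1row]
  have hfM : ∀ j, |f j| ≤ 4 * δ := by
    intro j
    have h1 : (∑ i, B i j) / (1 + δ) ≤ ∑ i, B i j / r i := by
      rw [Finset.sum_div]
      exact Finset.sum_le_sum fun i _ => div_le_div_of_nonneg_left (hnn i j) (hr0 i) (hr2 i)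
    have h2 : ∑ i, B i j / r i ≤ (∑ i, B i j) / (1 - δ) := by
      rw [Finset.sum_div]
      exact Finset.sum_le_sum fun i _ =>
        div_le_div_of_nonneg_left (hnn i j) (by linarith) (hr1 i)
    have h3 := abs_le.1 (hcol j)
    have h4 : (∑ i, B i j) / (1 - δ) ≤ 1 + 4 * δ := by
      rw [div_le_iff₀ (by linarith)]
      nlinarith
    have h5 : 1 - 4 * δ ≤ (∑ i, B i j) / (1 + δ) := by
      rw [le_div_iff₀ (by linarith)]
      nlinarith
    rw [abs_le]
    constructor <;> simp only [hf] <;> linarith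
  obtain ⟨F, hF1, hF2, hF3⟩ := exists_correction s hs c hc hcn f hfsum (4 * δ) hfM
  have hFB : ∀ i j, |F i j| ≤ η * (B i j / r i) := by
    intro i j
    refine (hF3 i j).trans ?_
    have h1 : s i j * (2 * (4 * δ) / c) ≤ s i j * (η * (β / (3 / 2))) := by
      refine mul_le_mul_of_nonneg_left ?_ (hs0 i j)
      rw [div_le_iff₀ hc]
      linarith
    have h2 : β * s i j / (3 / 2) ≤ B i j / r i :=
      div_le_div₀ (hnn i j) (hB i j) (hr0 i) (by linarith [hr2 i])
    calc _ ≤ _ := h1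
      _ = η * (β * s i j / (3 / 2)) := by ring
      _ ≤ _ := mul_le_mul_of_nonneg_left h2 hη0
  have hB1nn : ∀ i j, 0 ≤ B i j / r i := fun i j => div_nonneg (hnn i j) (hr0 i).le
  have hB'nn : ∀ i j, 0 ≤ B i j / r i + F i j := by
    intro i j
    have h1 := (abs_le.1 (hFB i j)).1
    have h2 : η * (B i j / r i) ≤ 1 * (B i j / r i) :=
      mul_le_mul_of_nonneg_right hη1 (hB1nn i j)
    linarith
  have main := permanent_lower (fun i j => B i j / r i + F i j) hB'nn
    (fun i => by rw [Finset.sum_add_distrib, hB1row, hF1, add_zero])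
    (fun j => by rw [Finset.sum_add_distrib, hF2]; simp [hf])
  refine main.trans ?_
  rw [Finset.mul_sum]
  refine Finset.sum_le_sum fun σ _ => ?_
  have hcard : ((1 + η) / (1 - δ)) ^ n = ∏ _i : Fin n, ((1 + η) / (1 - δ)) := by
    rw [Finset.prod_const, Finset.card_univ, Fintype.card_fin]
  rw [hcard, ← Finset.prod_mul_distrib]
  refine Finset.prod_le_prod (fun i _ => hB'nn _ _) fun i _ => ?_
  have h1 := (abs_le.1 (hFB i (σ i))).2
  have h2 : B i (σ i) / r i ≤ B i (σ i) / (1 - δ) :=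
    div_le_div_of_nonneg_left (hnn i _) (by linarith) (hr1 i)
  calc B i (σ i) / r i + F i (σ i) ≤ (1 + η) * (B i (σ i) / r i) := by linarith
    _ ≤ (1 + η) * (B i (σ i) / (1 - δ)) := mul_le_mul_of_nonneg_left h2 (by linarith)
    _ = _ := by ring

theorem sum_prod_dvd_approx (P : Finset ℕ) (hP : ∀ p ∈ P, p.Prime) (c : ℕ → ℝ) (v : ℕ → ℕ) (n : ℕ)
    (θ : ℝ)
    (hcount : ∀ S ⊆ P, |(((Finset.range n).filter fun a => (∏ p ∈ S, p) ∣ v a).card : ℝ) -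
      n / ((∏ p ∈ S, p : ℕ) : ℝ)| ≤ (2 * n / ((∏ p ∈ S, p : ℕ) : ℝ)) ^ θ) :
    |∑ a ∈ Finset.range n, ∏ p ∈ P, (if p ∣ v a then 1 + c p else 1) -
      n * ∏ p ∈ P, (1 + c p / p)| ≤ (2 * n : ℝ) ^ θ * ∏ p ∈ P, (1 + |c p| / (p : ℝ) ^ θ) := by
  have hdvd : ∀ S ⊆ P, ∀ m : ℕ, ((∏ p ∈ S, p) ∣ m ↔ ∀ p ∈ S, p ∣ m) := by
    intro S hS m
    constructor
    · intro h p hp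
      exact (Finset.dvd_prod_of_mem _ hp).trans h
    · intro h
      exact Finset.prod_primes_dvd m (fun p hp => (hP p (hS hp)).prime) h
  have hexp : ∀ a, ∏ p ∈ P, (if p ∣ v a then 1 + c p else 1) =
      ∑ S ∈ P.powerset, (∏ p ∈ S, c p) * (if (∏ p ∈ S, p) ∣ v a then 1 else 0) := by
    intro a
    have : ∀ p ∈ P, (if p ∣ v a then 1 + c p else 1) = 1 + c p * (if p ∣ v a then 1 else 0) := by
      intro p _
      split_ifs <;> simp
    rw [Finset.prod_congr rfl this, Finset.prod_one_add]
    refine Finset.sum_congr rfl fun S hS => ?_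
    rw [Finset.prod_mul_distrib]
    congr 1
    rw [Finset.prod_boole]
    simp only [hdvd S (Finset.mem_powerset.1 hS)]
  have h1 : ∑ a ∈ Finset.range n, ∏ p ∈ P, (if p ∣ v a then 1 + c p else 1) =
      ∑ S ∈ P.powerset, (∏ p ∈ S, c p) *
        (((Finset.range n).filter fun a => (∏ p ∈ S, p) ∣ v a).card : ℝ) := by
    simp only [hexp]
    rw [Finset.sum_comm]
    refine Finset.sum_congr rfl fun S _ => ?_
    rw [← Finset.mul_sum, Finset.sum_boole]
  have h2 : (n : ℝ) * ∏ p ∈ P, (1 + c p / p) =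
      ∑ S ∈ P.powerset, (∏ p ∈ S, c p) * (n / ((∏ p ∈ S, p : ℕ) : ℝ)) := by
    rw [Finset.prod_one_add, Finset.mul_sum]
    refine Finset.sum_congr rfl fun S _ => ?_
    rw [Finset.prod_div_distrib]
    push_cast
    ring
  rw [h1, h2, ← Finset.sum_sub_distrib]
  refine (Finset.abs_sum_le_sum_abs _ _).trans ?_
  rw [Finset.prod_one_add, Finset.mul_sum]
  refine Finset.sum_le_sum fun S hS => ?_
  rw [← mul_sub, abs_mul, Finset.abs_prod, Finset.prod_div_distrib]
  refine (mul_le_mul_of_nonneg_left (hcount S (Finset.mem_powerset.1 hS))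
    (Finset.prod_nonneg fun _ _ => abs_nonneg _)).trans (le_of_eq ?_)
  rw [Real.div_rpow (by positivity) (by positivity)]
  push_cast
  rw [Real.finsetProd_rpow _ _ (fun i _ => by positivity)]
  ring

theorem abs_sub_le_rpow_of_count (n d m : ℕ) (hd : 0 < d) (θ : ℝ) (h0 : 0 ≤ θ) (h1 : θ ≤ 1)
    (hm : |(m : ℝ) - n / d| ≤ 1) (hz : 2 * n < d → m = 0) :
    |(m : ℝ) - n / d| ≤ (2 * n / d : ℝ) ^ θ := by
  have hd' : (0 : ℝ) < d := by exact_mod_cast hd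
  rcases lt_or_ge (2 * n) d with h | h
  · have hx1 : (2 * n / d : ℝ) ≤ 1 := by
      rw [div_le_one hd']
      exact_mod_cast h.le
    rw [hz h]
    rcases Nat.eq_zero_or_pos n with rfl | hn
    · simp
      exact Real.rpow_nonneg le_rfl _
    have hn' : (0 : ℝ) < n := by exact_mod_cast hn
    have hx0 : (0 : ℝ) < 2 * n / d := by positivity
    calc |((0 : ℕ) : ℝ) - n / d| = n / d := by
          rw [Nat.cast_zero, zero_sub, abs_neg, abs_of_pos (by positivity)]
      _ ≤ 2 * n / d := by gcongr; linarith
      _ = (2 * n / d : ℝ) ^ (1 : ℝ) := (Real.rpow_one _).symm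
      _ ≤ _ := Real.rpow_le_rpow_of_exponent_ge hx0 hx1 h1
  · refine hm.trans (Real.one_le_rpow ?_ h0)
    rw [one_le_div hd']
    exact_mod_cast h

theorem abs_count_succ_sub_le (n d : ℕ) (hd : 0 < d) :
    |(((Finset.range n).filter fun a => d ∣ a + 1).card : ℝ) - n / d| ≤ 1 ∧
      (2 * n < d → ((Finset.range n).filter fun a => d ∣ a + 1).card = 0) := by
  rw [Nat.card_multiples]
  have hd' : (0 : ℝ) < d := by exact_mod_cast hd
  constructor
  · rw [← Nat.floor_div_eq_div (K := ℝ), abs_le]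
    have h1 := Nat.floor_le (a := (n / d : ℝ)) (by positivity)
    have h2 := Nat.lt_floor_add_one (n / d : ℝ)
    constructor <;> linarith
  · intro h
    exact Nat.div_eq_of_lt (by omega)

theorem abs_count_odd_sub_le (n d : ℕ) (hd : Odd d) :
    |(((Finset.range n).filter fun a => d ∣ 2 * a + 1).card : ℝ) - n / d| ≤ 1 ∧
      (2 * n < d → ((Finset.range n).filter fun a => d ∣ 2 * a + 1).card = 0) := by
  obtain ⟨e, rfl⟩ := hd
  have hiff : ∀ a, 2 * e + 1 ∣ 2 * a + 1 ↔ a ≡ e [MOD 2 * e + 1] := by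
    intro a
    rw [Nat.modEq_iff_dvd]
    have hcop : IsCoprime ((2 * e + 1 : ℕ) : ℤ) 2 := by
      refine ⟨1, -e, ?_⟩
      push_cast
      ring
    constructor
    · intro h
      have h' : ((2 * e + 1 : ℕ) : ℤ) ∣ ((2 * a + 1 : ℕ) : ℤ) := by exact_mod_cast h
      refine hcop.dvd_of_dvd_mul_left ?_
      have : (2 : ℤ) * ((e : ℤ) - a) = ((2 * e + 1 : ℕ) : ℤ) - ((2 * a + 1 : ℕ) : ℤ) := by
        push_cast; ring
      rw [this]
      exact dvd_sub (dvd_refl _) h'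
    · intro h
      have : ((2 * a + 1 : ℕ) : ℤ) = ((2 * e + 1 : ℕ) : ℤ) - 2 * ((e : ℤ) - a) := by
        push_cast; ring
      have h2 : ((2 * e + 1 : ℕ) : ℤ) ∣ ((2 * a + 1 : ℕ) : ℤ) := by
        rw [this]
        exact dvd_sub (dvd_refl _) (Dvd.dvd.mul_left h 2)
      exact_mod_cast h2
  constructor
  · have hc : ((Finset.range n).filter fun a => 2 * e + 1 ∣ 2 * a + 1).card =
        n.count (· ≡ e [MOD 2 * e + 1]) := by
      rw [Nat.count_eq_card_filter_range]
      simp only [hiff]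
    rw [hc, Nat.count_modEq_card _ (by omega)]
    have h1 : (n : ℝ) / ((2 * e + 1 : ℕ) : ℝ) = ((n / (2 * e + 1) : ℕ) : ℝ) +
        ((n % (2 * e + 1) : ℕ) : ℝ) / ((2 * e + 1 : ℕ) : ℝ) := by
      have h := Nat.div_add_mod n (2 * e + 1)
      have hpos : ((2 * e + 1 : ℕ) : ℝ) ≠ 0 := by positivity
      field_simp
      exact_mod_cast h.symm
    have h2 : (((n % (2 * e + 1) : ℕ) : ℝ)) / ((2 * e + 1 : ℕ) : ℝ) ≤ 1 := by
      rw [div_le_one (by positivity)]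
      exact_mod_cast (Nat.mod_lt _ (by omega)).le
    have h3 : 0 ≤ (((n % (2 * e + 1) : ℕ) : ℝ)) / ((2 * e + 1 : ℕ) : ℝ) := by positivity
    rw [h1, abs_le]
    push_cast at *
    split_ifs <;> constructor <;> linarith
  · intro h
    rw [Finset.card_eq_zero, Finset.filter_eq_empty_iff]
    intro a ha hd
    have := Nat.le_of_dvd (by omega) hd
    rw [Finset.mem_range] at ha
    omega

/-- The odd primes up to `N`. -/
def oddPrimes (N : ℕ) : Finset ℕ := (Finset.range (N + 1)).filter fun p => p.Prime ∧ 2 < p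

theorem mem_oddPrimes {N p : ℕ} : p ∈ oddPrimes N ↔ p ≤ N ∧ p.Prime ∧ 2 < p := by
  simp [oddPrimes]

/-- The weight `∏_{2 < p ∣ m} (p - 1) / (p - 2)`. -/
noncomputable def primeWeight (N m : ℕ) : ℝ :=
  ∏ p ∈ oddPrimes N, if p ∣ m then ((p : ℝ) - 1) / (p - 2) else 1

/-- The product `∏_{2 < p ≤ N} (p - 1) ^ 2 / (p (p - 2))`. -/
noncomputable def weightConst (N : ℕ) : ℝ :=
  ∏ p ∈ oddPrimes N, ((p : ℝ) - 1) ^ 2 / (p * (p - 2))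

theorem three_le_of_mem_oddPrimes {N p : ℕ} (hp : p ∈ oddPrimes N) : (3 : ℝ) ≤ p := by
  exact_mod_cast (mem_oddPrimes.1 hp).2.2

theorem exists_two_pow_card_primeFactors_le (ε : ℝ) (hε : 0 < ε) :
    ∃ C : ℝ, 1 ≤ C ∧ ∀ m : ℕ, m ≠ 0 → (2 : ℝ) ^ m.primeFactors.card ≤ C * (m : ℝ) ^ ε := by
  have h := (tendsto_rpow_atTop hε).comp (tendsto_natCast_atTop_atTop (R := ℝ))
  obtain ⟨T, hT⟩ := Filter.eventually_atTop.1 (h.eventually_ge_atTop 2)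
  refine ⟨2 ^ T, one_le_pow₀ (by norm_num), fun m hm => ?_⟩
  have h1 : (2 : ℝ) ^ m.primeFactors.card ≤
      ∏ p ∈ m.primeFactors, ((if p < T then (2 : ℝ) else 1) * (p : ℝ) ^ ε) := by
    rw [← Finset.prod_const]
    refine Finset.prod_le_prod (fun _ _ => by norm_num) fun p hp => ?_
    have hp1 : (1 : ℝ) ≤ p := by exact_mod_cast (Nat.prime_of_mem_primeFactors hp).one_le
    split_ifs with hpT
    · have := Real.one_le_rpow hp1 hε.le
      linarith
    · rw [one_mul]
      exact hT p (not_lt.1 hpT)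
  refine h1.trans ?_
  rw [Finset.prod_mul_distrib]
  refine mul_le_mul ?_ ?_ (Finset.prod_nonneg fun _ _ => by positivity) (by positivity)
  · rw [Finset.prod_ite, Finset.prod_const_one, mul_one, Finset.prod_const]
    refine pow_le_pow_right₀ (by norm_num) ?_
    calc _ ≤ (Finset.range T).card := Finset.card_le_card fun p hp => by
            simpa using (Finset.mem_filter.1 hp).2
      _ = T := Finset.card_range T
  · rw [Real.finsetProd_rpow _ _ (fun i _ => by positivity)]
    refine Real.rpow_le_rpow (by positivity) ?_ hε.le
    have := Nat.le_of_dvd (Nat.pos_of_ne_zero hm) (Nat.prod_primeFactors_dvd m)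
    rw [← Nat.cast_prod]
    exact Nat.cast_le.2 this

theorem exists_prod_one_add_le :
    ∃ D : ℝ, 1 ≤ D ∧ ∀ N : ℕ,
      ∏ p ∈ oddPrimes N, (1 + 1 / ((p : ℝ) - 2) / (p : ℝ) ^ (1 / 4 : ℝ)) ≤ D := by
  have hs : Summable fun p : ℕ => 3 * ((p : ℝ) ^ (5 / 4 : ℝ))⁻¹ :=
    (Real.summable_nat_rpow_inv.2 (by norm_num)).mul_left 3
  refine ⟨Real.exp (∑' p : ℕ, 3 * ((p : ℝ) ^ (5 / 4 : ℝ))⁻¹), ?_, fun N => ?_⟩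
  · exact Real.one_le_exp (tsum_nonneg fun p => by positivity)
  calc ∏ p ∈ oddPrimes N, (1 + 1 / ((p : ℝ) - 2) / (p : ℝ) ^ (1 / 4 : ℝ))
      ≤ ∏ p ∈ oddPrimes N, Real.exp (3 * ((p : ℝ) ^ (5 / 4 : ℝ))⁻¹) := by
        refine Finset.prod_le_prod (fun p hp => ?_) fun p hp => ?_
        · have := three_le_of_mem_oddPrimes hp
          have h2 : 0 < (p : ℝ) - 2 := by linarith
          positivity
        · have h3 := three_le_of_mem_oddPrimes hp
          have h2 : 0 < (p : ℝ) - 2 := by linarith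
          have h0 : 0 < (p : ℝ) := by linarith
          have e : (p : ℝ) ^ (5 / 4 : ℝ) = p * (p : ℝ) ^ (1 / 4 : ℝ) := by
            rw [← Real.rpow_one_add' h0.le (by norm_num)]
            norm_num
          have h4 : 1 / ((p : ℝ) - 2) ≤ 3 / p := by
            rw [div_le_div_iff₀ h2 h0]
            linarith
          have h5 : 1 / ((p : ℝ) - 2) / (p : ℝ) ^ (1 / 4 : ℝ) ≤
              3 * ((p : ℝ) ^ (5 / 4 : ℝ))⁻¹ := by
            rw [e, mul_inv]
            calc _ ≤ 3 / (p : ℝ) / (p : ℝ) ^ (1 / 4 : ℝ) := by gcongr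
              _ = _ := by ring
          calc _ ≤ 1 + 3 * ((p : ℝ) ^ (5 / 4 : ℝ))⁻¹ := by linarith
            _ ≤ _ := by
              rw [add_comm]
              exact Real.add_one_le_exp _
    _ = Real.exp (∑ p ∈ oddPrimes N, 3 * ((p : ℝ) ^ (5 / 4 : ℝ))⁻¹) := (Real.exp_sum _ _).symm
    _ ≤ _ := Real.exp_le_exp.2 (hs.sum_le_tsum _ fun p _ => by positivity)

theorem prod_two_dvd_le (N u : ℕ) (hu : u ≠ 0) :
    ∏ p ∈ oddPrimes N, (if p ∣ u then (2 : ℝ) else 1) ≤ 2 ^ u.primeFactors.card := by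
  rw [Finset.prod_ite, Finset.prod_const_one, mul_one, Finset.prod_const]
  refine pow_le_pow_right₀ (by norm_num) (Finset.card_le_card fun p hp => ?_)
  obtain ⟨h1, h2⟩ := Finset.mem_filter.1 hp
  exact Nat.mem_primeFactors.2 ⟨(mem_oddPrimes.1 h1).2.1, h2, hu⟩

theorem one_le_primeWeight (N m : ℕ) : 1 ≤ primeWeight N m := by
  rw [primeWeight]
  refine le_trans Finset.prod_const_one.ge (Finset.prod_le_prod (fun _ _ => zero_le_one) fun p hp => ?_)
  have := three_le_of_mem_oddPrimes hp
  split_ifs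
  · rw [one_le_div (by linarith)]
    linarith
  · exact le_rfl

theorem primeWeight_le (N m : ℕ) (hm : m ≠ 0) : primeWeight N m ≤ 2 ^ m.primeFactors.card := by
  refine le_trans ?_ (prod_two_dvd_le N m hm)
  refine Finset.prod_le_prod (fun p hp => ?_) fun p hp => ?_
  all_goals have := three_le_of_mem_oddPrimes hp
  · split_ifs
    · exact div_nonneg (by linarith) (by linarith)
    · norm_num
  · split_ifs
    · rw [div_le_iff₀ (by linarith)]
      linarith
    · exact le_rfl

theorem one_le_weightConst (N : ℕ) : 1 ≤ weightConst N := by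
  refine le_trans Finset.prod_const_one.ge (Finset.prod_le_prod (fun _ _ => zero_le_one) fun p hp => ?_)
  have := three_le_of_mem_oddPrimes hp
  rw [one_le_div (mul_pos (by linarith) (by linarith))]
  nlinarith

theorem weightConst_le {D : ℝ} (N : ℕ)
    (hD : ∏ p ∈ oddPrimes N, (1 + 1 / ((p : ℝ) - 2) / (p : ℝ) ^ (1 / 4 : ℝ)) ≤ D) :
    weightConst N ≤ D := by
  refine le_trans (Finset.prod_le_prod (fun p hp => ?_) fun p hp => ?_) hD
  all_goals have h3 := three_le_of_mem_oddPrimes hp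
  all_goals have h2 : 0 < (p : ℝ) - 2 := by linarith
  all_goals have h0 : 0 < (p : ℝ) := by linarith
  · positivity
  · have e : ((p : ℝ) - 1) ^ 2 / (p * (p - 2)) = 1 + 1 / ((p : ℝ) - 2) / p := by
      field_simp
      ring
    rw [e]
    have : (p : ℝ) ^ (1 / 4 : ℝ) ≤ p := by
      calc (p : ℝ) ^ (1 / 4 : ℝ) ≤ (p : ℝ) ^ (1 : ℝ) :=
            Real.rpow_le_rpow_of_exponent_le (by linarith) (by norm_num)
        _ = p := Real.rpow_one _
    gcongr

/-- Condition on a sequence making its divisor counts equidistributed. -/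
def CountsWell (n : ℕ) (v : ℕ → ℕ) : Prop :=
  ∀ S ⊆ oddPrimes (2 * n),
    |(((Finset.range n).filter fun a => (∏ p ∈ S, p) ∣ v a).card : ℝ) -
      n / ((∏ p ∈ S, p : ℕ) : ℝ)| ≤ (2 * n / ((∏ p ∈ S, p : ℕ) : ℝ)) ^ (1 / 4 : ℝ)

theorem countsWell_succ (n : ℕ) : CountsWell n fun a => a + 1 := by
  intro S hS
  have hpos : 0 < ∏ p ∈ S, p :=
    Finset.prod_pos fun p hp => (mem_oddPrimes.1 (hS hp)).2.1.pos
  obtain ⟨h1, h2⟩ := abs_count_succ_sub_le n _ hpos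
  exact abs_sub_le_rpow_of_count n _ _ hpos _ (by norm_num) (by norm_num) h1 h2

theorem countsWell_odd (n : ℕ) : CountsWell n fun a => 2 * a + 1 := by
  intro S hS
  have hpos : 0 < ∏ p ∈ S, p :=
    Finset.prod_pos fun p hp => (mem_oddPrimes.1 (hS hp)).2.1.pos
  have hodd : Odd (∏ p ∈ S, p) := by
    refine Finset.prod_induction _ Odd (fun a b => Odd.mul) odd_one fun p hp => ?_
    obtain ⟨_, hpp, hp2⟩ := mem_oddPrimes.1 (hS hp)
    exact hpp.odd_of_ne_two hp2.ne'
  obtain ⟨h1, h2⟩ := abs_count_odd_sub_le n _ hodd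
  exact abs_sub_le_rpow_of_count n _ _ hpos _ (by norm_num) (by norm_num) h1 h2

/-- Indicator that `u` and `m` have no common odd prime factor up to `N`. -/
noncomputable def coprimeInd (N u m : ℕ) : ℝ :=
  ∏ p ∈ oddPrimes N, if p ∣ u ∧ p ∣ m then (0 : ℝ) else 1

theorem weighted_sum_approx {n : ℕ} {v : ℕ → ℕ} (hv : CountsWell n v) {D : ℝ}
    (hD : ∏ p ∈ oddPrimes (2 * n), (1 + 1 / ((p : ℝ) - 2) / (p : ℝ) ^ (1 / 4 : ℝ)) ≤ D)
    (u : ℕ) (hu : u ≠ 0) :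
    |∑ a ∈ Finset.range n, primeWeight (2 * n) (v a) * coprimeInd (2 * n) u (v a) -
      n * (weightConst (2 * n) / primeWeight (2 * n) u)| ≤
      (2 * n : ℝ) ^ (1 / 4 : ℝ) * (2 ^ u.primeFactors.card * D) := by
  set P := oddPrimes (2 * n) with hPdef
  have key := sum_prod_dvd_approx P (fun p hp => (mem_oddPrimes.1 hp).2.1)
    (fun p => if p ∣ u then -1 else 1 / ((p : ℝ) - 2)) v n (1 / 4) hv
  have e1 : ∀ a, primeWeight (2 * n) (v a) * coprimeInd (2 * n) u (v a) =
      ∏ p ∈ P, (if p ∣ v a then 1 + (if p ∣ u then -1 else 1 / ((p : ℝ) - 2)) else 1) := by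
    intro a
    rw [primeWeight, coprimeInd, ← Finset.prod_mul_distrib]
    refine Finset.prod_congr rfl fun p hp => ?_
    have h3 := three_le_of_mem_oddPrimes hp
    have h2 : (p : ℝ) - 2 ≠ 0 := by linarith
    by_cases h1 : p ∣ v a <;> by_cases h2 : p ∣ u <;> simp [h1, h2]
    field_simp
    ring
  have e2 : weightConst (2 * n) / primeWeight (2 * n) u =
      ∏ p ∈ P, (1 + (if p ∣ u then -1 else 1 / ((p : ℝ) - 2)) / p) := by
    rw [weightConst, primeWeight, ← Finset.prod_div_distrib]
    refine Finset.prod_congr rfl fun p hp => ?_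
    have h3 := three_le_of_mem_oddPrimes hp
    have h2 : (p : ℝ) - 2 ≠ 0 := by linarith
    have h1 : (p : ℝ) - 1 ≠ 0 := by linarith
    have h0 : (p : ℝ) ≠ 0 := by linarith
    split_ifs <;> field_simp <;> ring
  simp only [e1, e2]
  refine key.trans (mul_le_mul_of_nonneg_left ?_ (by positivity))
  calc ∏ p ∈ P, (1 + |if p ∣ u then -1 else 1 / ((p : ℝ) - 2)| / (p : ℝ) ^ (1 / 4 : ℝ))
      ≤ ∏ p ∈ P, ((if p ∣ u then (2 : ℝ) else 1) *
          (1 + 1 / ((p : ℝ) - 2) / (p : ℝ) ^ (1 / 4 : ℝ))) := by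
        refine Finset.prod_le_prod (fun p _ => by positivity) fun p hp => ?_
        have h3 := three_le_of_mem_oddPrimes hp
        have h2 : 0 < (p : ℝ) - 2 := by linarith
        have h4 : 1 ≤ (p : ℝ) ^ (1 / 4 : ℝ) := Real.one_le_rpow (by linarith) (by norm_num)
        have h5 : 0 ≤ 1 / ((p : ℝ) - 2) / (p : ℝ) ^ (1 / 4 : ℝ) := by positivity
        split_ifs
        · have : |(-1 : ℝ)| / (p : ℝ) ^ (1 / 4 : ℝ) ≤ 1 := by
            rw [abs_neg, abs_one, div_le_one (by linarith)]
            exact h4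
          linarith
        · rw [abs_of_pos (by positivity), one_mul]
    _ = (∏ p ∈ P, (if p ∣ u then (2 : ℝ) else 1)) *
          ∏ p ∈ P, (1 + 1 / ((p : ℝ) - 2) / (p : ℝ) ^ (1 / 4 : ℝ)) := Finset.prod_mul_distrib
    _ ≤ _ := by
        refine mul_le_mul (prod_two_dvd_le _ u hu) hD (Finset.prod_nonneg fun p hp => ?_)
          (by positivity)
        have h3 := three_le_of_mem_oddPrimes hp
        have h2 : 0 < (p : ℝ) - 2 := by linarith
        positivity

theorem coprime_count_lower {n : ℕ} {v : ℕ → ℕ} (hv : CountsWell n v) (u : ℕ) (hu : u ≠ 0) :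
    (n : ℝ) / 2 ^ u.primeFactors.card - (2 * n : ℝ) ^ (1 / 4 : ℝ) * 2 ^ u.primeFactors.card ≤
      ∑ a ∈ Finset.range n, coprimeInd (2 * n) u (v a) := by
  set P := oddPrimes (2 * n) with hPdef
  have key := sum_prod_dvd_approx P (fun p hp => (mem_oddPrimes.1 hp).2.1)
    (fun p => if p ∣ u then -1 else 0) v n (1 / 4) hv
  have e1 : ∀ a, coprimeInd (2 * n) u (v a) =
      ∏ p ∈ P, (if p ∣ v a then 1 + (if p ∣ u then (-1 : ℝ) else 0) else 1) := by
    intro a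
    refine Finset.prod_congr rfl fun p hp => ?_
    by_cases h1 : p ∣ v a <;> by_cases h2 : p ∣ u <;> simp [h1, h2]
  simp only [e1]
  have h1 : ((2 : ℝ) ^ u.primeFactors.card)⁻¹ ≤
      ∏ p ∈ P, (1 + (if p ∣ u then (-1 : ℝ) else 0) / p) := by
    calc ((2 : ℝ) ^ u.primeFactors.card)⁻¹ ≤ (∏ p ∈ P, (if p ∣ u then (2 : ℝ) else 1))⁻¹ := by
          refine inv_anti₀ (Finset.prod_pos fun p _ => ?_) (prod_two_dvd_le _ u hu)
          split_ifs <;> norm_num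
      _ = ∏ p ∈ P, (if p ∣ u then (2 : ℝ) else 1)⁻¹ := (Finset.prod_inv_distrib _).symm
      _ ≤ _ := by
          refine Finset.prod_le_prod (fun p _ => by positivity) fun p hp => ?_
          have h3 := three_le_of_mem_oddPrimes hp
          split_ifs
          · have : (1 : ℝ) / p ≤ 1 / 3 := by gcongr
            have e : (-1 : ℝ) / p = -(1 / p) := by ring
            rw [e]
            linarith
          · simp
  have h2 : ∏ p ∈ P, (1 + |if p ∣ u then (-1 : ℝ) else 0| / (p : ℝ) ^ (1 / 4 : ℝ)) ≤
      2 ^ u.primeFactors.card := by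
    refine le_trans (Finset.prod_le_prod (fun p _ => by positivity) fun p hp => ?_)
      (prod_two_dvd_le (2 * n) u hu)
    have h3 := three_le_of_mem_oddPrimes hp
    have h4 : 1 ≤ (p : ℝ) ^ (1 / 4 : ℝ) := Real.one_le_rpow (by linarith) (by norm_num)
    split_ifs
    · have : |(-1 : ℝ)| / (p : ℝ) ^ (1 / 4 : ℝ) ≤ 1 := by
        rw [abs_neg, abs_one, div_le_one (by linarith)]
        exact h4
      linarith
    · simp
  have h3 := (abs_le.1 key).1
  have h4 := mul_le_mul_of_nonneg_left h1 (Nat.cast_nonneg (α := ℝ) n)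
  have h5 := mul_le_mul_of_nonneg_left h2 (by positivity : 0 ≤ (2 * n : ℝ) ^ (1 / 4 : ℝ))
  rw [div_eq_mul_inv]
  linarith

theorem coprimeInd_comm (N u m : ℕ) : coprimeInd N u m = coprimeInd N m u := by
  simp only [coprimeInd, and_comm]

theorem coprimeInd_mul (N u u' m : ℕ) :
    coprimeInd N (u * u') m = coprimeInd N u m * coprimeInd N u' m := by
  rw [coprimeInd, coprimeInd, coprimeInd, ← Finset.prod_mul_distrib]
  refine Finset.prod_congr rfl fun p hp => ?_
  have hp' := (mem_oddPrimes.1 hp).2.1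
  by_cases h1 : p ∣ m <;> by_cases h2 : p ∣ u <;> by_cases h3 : p ∣ u' <;>
    simp [h1, h2, h3, hp'.dvd_mul]

theorem coprimeInd_odd (N u m : ℕ) (hu : Odd u) (huN : u ≤ N) :
    coprimeInd N u m = if Nat.gcd u m = 1 then 1 else 0 := by
  split_ifs with h
  · refine Finset.prod_eq_one fun p hp => if_neg fun ⟨h1, h2⟩ => ?_
    have := Nat.dvd_gcd h1 h2
    rw [h] at this
    exact (mem_oddPrimes.1 hp).2.1.one_lt.ne' (Nat.dvd_one.1 this)
  · obtain ⟨p, hp, h1, h2⟩ := Nat.Prime.not_coprime_iff_dvd.1 h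
    have hu0 : 0 < u := hu.pos
    refine Finset.prod_eq_zero (i := p) (mem_oddPrimes.2 ⟨(Nat.le_of_dvd hu0 h1).trans huN, hp, ?_⟩)
      (if_pos ⟨h1, h2⟩)
    refine lt_of_le_of_ne hp.two_le ?_
    rintro rfl
    exact (Nat.not_even_iff_odd.2 hu) (even_iff_two_dvd.2 h1)

theorem card_filter_succ_le (n p : ℕ) (hp : p.Prime) :
    (((Finset.range n).filter fun a => p ∣ a + 1).card : ℝ) ≤ n / p + 1 := by
  linarith [(abs_le.1 (abs_count_succ_sub_le n p hp.pos).1).2]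

theorem card_filter_odd_le (n p : ℕ) (hp : Odd p) :
    (((Finset.range n).filter fun a => p ∣ 2 * a + 1).card : ℝ) ≤ n / p + 1 := by
  linarith [(abs_le.1 (abs_count_odd_sub_le n p hp).1).2]

theorem prod_primeWeight_le (N n : ℕ) (v : ℕ → ℕ)
    (hv : ∀ p ∈ oddPrimes N,
      (((Finset.range n).filter fun a => p ∣ v a).card : ℝ) ≤ n / p + 1) :
    ∏ a ∈ Finset.range n, primeWeight N (v a) ≤
      ∏ p ∈ oddPrimes N, (((p : ℝ) - 1) / (p - 2)) ^ ((n : ℝ) / p + 1) := by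
  simp only [primeWeight]
  rw [Finset.prod_comm]
  refine Finset.prod_le_prod (fun p hp => Finset.prod_nonneg fun a _ => ?_) fun p hp => ?_
  · have h3 := three_le_of_mem_oddPrimes hp
    split_ifs
    · exact div_nonneg (by linarith) (by linarith)
    · exact zero_le_one
  · have h3 := three_le_of_mem_oddPrimes hp
    rw [Finset.prod_ite, Finset.prod_const_one, mul_one, Finset.prod_const, ← Real.rpow_natCast]
    refine Real.rpow_le_rpow_of_exponent_le ?_ (hv p hp)
    rw [one_le_div (by linarith)]
    linarith

theorem prod_oddPrimes_ratio_le (M : ℕ) :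
    ∏ p ∈ oddPrimes (M + 2), ((p : ℝ) - 1) / (p - 2) ≤ M + 1 := by
  have h : ∀ M : ℕ, ∏ k ∈ Finset.range (M + 3),
      (if 2 < k then ((k : ℝ) - 1) / (k - 2) else 1) = M + 1 := by
    intro M
    induction M with
    | zero => simp [Finset.prod_range_succ]
    | succ M ih =>
      rw [Finset.prod_range_succ, ih, if_pos (by omega)]
      push_cast
      have : (M : ℝ) + 3 - 2 ≠ 0 := by
        have := Nat.cast_nonneg (α := ℝ) M
        linarith
      field_simp
      ring
  rw [← h M, oddPrimes, Finset.prod_filter]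
  refine Finset.prod_le_prod (fun k _ => ?_) fun k _ => ?_
  · split_ifs with hk
    · have : (3 : ℝ) ≤ k := by exact_mod_cast hk.2
      exact div_nonneg (by linarith) (by linarith)
    · exact zero_le_one
  · by_cases hk : 2 < k
    · have h3 : (3 : ℝ) ≤ k := by exact_mod_cast hk
      have : 1 ≤ ((k : ℝ) - 1) / (k - 2) := by
        rw [one_le_div (by linarith)]
        linarith
      simp only [hk, and_true, if_true]
      split_ifs
      · exact le_rfl
      · exact this
    · simp [hk]

/-- The local factor at `x` of the Euler product. -/
noncomputable def localFactor (x : ℝ) : ℝ :=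
  (x - 1) ^ (2 * (1 - 1 / x)) / (x * (x - 2) ^ (1 - 2 / x))

theorem localFactor_pos {x : ℝ} (hx : 3 ≤ x) : 0 < localFactor x := by
  have h0 : 0 < x := by linarith
  have h1 : 0 < x - 1 := by linarith
  have h2 : 0 < x - 2 := by linarith
  rw [localFactor]
  positivity

theorem localFactor_mul_rpow {x : ℝ} (hx : 3 ≤ x) :
    localFactor x * ((x - 1) / (x - 2)) ^ (2 / x) = (x - 1) ^ 2 / (x * (x - 2)) := by
  have h0 : 0 < x := by linarith
  have h1 : 0 < x - 1 := by linarith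
  have h2 : 0 < x - 2 := by linarith
  have e1 : (x - 1) ^ (2 * (1 - 1 / x)) * (x - 1) ^ (2 / x) = (x - 1) ^ 2 := by
    rw [← Real.rpow_add h1, ← Real.rpow_two]
    congr 1
    ring
  have e2 : (x - 2) ^ (1 - 2 / x) * (x - 2) ^ (2 / x) = x - 2 := by
    rw [← Real.rpow_add h2]
    convert Real.rpow_one _ using 2
    ring
  rw [localFactor, Real.div_rpow h1.le h2.le, div_mul_div_comm, e1, mul_assoc, e2]

theorem localFactor_le_one {x : ℝ} (hx : 3 ≤ x) : localFactor x ≤ 1 := by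
  have h0 : 0 < x := by linarith
  have h1 : 0 < x - 1 := by linarith
  have h2 : 0 < x - 2 := by linarith
  rw [← Real.log_nonpos_iff (localFactor_pos hx).le]
  have e : Real.log (localFactor x) = 2 / x * Real.log ((x - 1) / x) +
      (1 - 2 / x) * Real.log ((x - 1) ^ 2 / (x * (x - 2))) := by
    rw [localFactor, Real.log_div (by positivity) (by positivity),
      Real.log_mul (by positivity) (by positivity), Real.log_rpow h1, Real.log_rpow h2,
      Real.log_div h1.ne' h0.ne', Real.log_div (by positivity) (by positivity), Real.log_pow,
      Real.log_mul h0.ne' h2.ne']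
    push_cast
    ring
  have b1 := Real.log_le_sub_one_of_pos (show 0 < (x - 1) / x by positivity)
  have b2 := Real.log_le_sub_one_of_pos (show 0 < (x - 1) ^ 2 / (x * (x - 2)) by positivity)
  have h3 : 0 ≤ 1 - 2 / x := by
    rw [sub_nonneg, div_le_one h0]
    linarith
  have c1 := mul_le_mul_of_nonneg_left b1 (by positivity : 0 ≤ 2 / x)
  have c2 := mul_le_mul_of_nonneg_left b2 h3
  have e2 : 2 / x * ((x - 1) / x - 1) + (1 - 2 / x) * ((x - 1) ^ 2 / (x * (x - 2)) - 1) =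
      -(1 / x ^ 2) := by
    field_simp
    ring
  have : 0 < 1 / x ^ 2 := by positivity
  rw [e]
  linarith

/-- An infinite product of factors in `(0, 1]` is nonnegative and at most any finite subproduct. -/
theorem tprod_nonneg_le_prod {ι : Type*} (f : ι → ℝ) (h0 : ∀ i, 0 ≤ f i) (h1 : ∀ i, f i ≤ 1)
    (s : Finset ι) : 0 ≤ ∏' i, f i ∧ ∏' i, f i ≤ ∏ i ∈ s, f i := by
  have hanti : Antitone fun s : Finset ι => ∏ i ∈ s, f i := by
    intro s t hst
    classical
    simp only [← Finset.prod_sdiff hst]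
    exact mul_le_of_le_one_left (Finset.prod_nonneg fun i _ => h0 i)
      (Finset.prod_le_one (fun i _ => h0 i) fun i _ => h1 i)
  have hbdd : BddBelow (Set.range fun s : Finset ι => ∏ i ∈ s, f i) :=
    ⟨0, by rintro _ ⟨s, rfl⟩; exact Finset.prod_nonneg fun i _ => h0 i⟩
  have h : HasProd f (⨅ s : Finset ι, ∏ i ∈ s, f i) := tendsto_atTop_ciInf hanti hbdd
  rw [h.tprod_eq]
  exact ⟨le_ciInf fun s => Finset.prod_nonneg fun i _ => h0 i, ciInf_le hbdd s⟩

theorem coprimeConstOdd_le (N : ℕ) :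
    0 ≤ coprimeConstOdd ∧ coprimeConstOdd ≤ ∏ p ∈ oddPrimes N, localFactor p := by
  have h3 : ∀ p : {p : Nat.Primes // 2 < (p : ℕ)}, (3 : ℝ) ≤ ((p.1 : ℕ) : ℝ) := fun p => by
    exact_mod_cast p.2
  let g : {p // p ∈ oddPrimes N} → {p : Nat.Primes // 2 < (p : ℕ)} := fun p =>
    ⟨⟨p.1, (mem_oddPrimes.1 p.2).2.1⟩, (mem_oddPrimes.1 p.2).2.2⟩
  have hg : Function.Injective g := fun p q hpq => by
    have h : (((g p).1 : Nat.Primes) : ℕ) = ((g q).1 : Nat.Primes) := by rw [hpq]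
    exact Subtype.ext h
  have h := tprod_nonneg_le_prod
    (fun p : {p : Nat.Primes // 2 < (p : ℕ)} => localFactor ((p.1 : ℕ) : ℝ))
    (fun p => (localFactor_pos (h3 p)).le) (fun p => localFactor_le_one (h3 p))
    ((oddPrimes N).attach.map ⟨g, hg⟩)
  rw [Finset.prod_map] at h
  have e : ∏ p ∈ (oddPrimes N).attach, localFactor (((⟨g, hg⟩ :
      {p // p ∈ oddPrimes N} ↪ {p : Nat.Primes // 2 < (p : ℕ)}) p).1 : ℕ) =
      ∏ p ∈ oddPrimes N, localFactor p :=
    Finset.prod_attach (oddPrimes N) fun p => localFactor p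
  rw [e] at h
  exact h

theorem prod_primeWeight_mul_le (n : ℕ) (hn : 1 ≤ n) :
    (∏ p ∈ oddPrimes (2 * n), localFactor p) ^ n *
      ((∏ a ∈ Finset.range n, primeWeight (2 * n) (2 * a + 1)) *
        ∏ a ∈ Finset.range n, primeWeight (2 * n) (a + 1)) ≤
      weightConst (2 * n) ^ n * (2 * n) ^ 2 := by
  set P := oddPrimes (2 * n) with hP
  have hpos : ∀ p ∈ P, 0 < ((p : ℝ) - 1) / (p - 2) := fun p hp => by
    have h3 := three_le_of_mem_oddPrimes hp
    exact div_pos (by linarith) (by linarith)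
  have hF : ∀ p ∈ P, 0 < localFactor p := fun p hp =>
    localFactor_pos (three_le_of_mem_oddPrimes hp)
  have h1 := prod_primeWeight_le (2 * n) n (fun a => 2 * a + 1) fun p hp =>
    card_filter_odd_le n p
      ((mem_oddPrimes.1 hp).2.1.odd_of_ne_two (mem_oddPrimes.1 hp).2.2.ne')
  have h2 := prod_primeWeight_le (2 * n) n (fun a => a + 1) fun p hp =>
    card_filter_succ_le n p (mem_oddPrimes.1 hp).2.1
  have h3 : ∏ p ∈ P, ((p : ℝ) - 1) / (p - 2) ≤ 2 * n := by
    obtain ⟨m, rfl⟩ : ∃ m, n = m + 1 := ⟨n - 1, by omega⟩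
    have := prod_oddPrimes_ratio_le (2 * m)
    rw [hP, mul_add, mul_one]
    push_cast at this ⊢
    linarith
  have h4 : ∏ p ∈ P, (((p : ℝ) - 1) / (p - 2)) ^ ((n : ℝ) / p + 1) =
      (∏ p ∈ P, (((p : ℝ) - 1) / (p - 2)) ^ ((n : ℝ) / p)) *
        ∏ p ∈ P, ((p : ℝ) - 1) / (p - 2) := by
    rw [← Finset.prod_mul_distrib]
    exact Finset.prod_congr rfl fun p hp => by rw [Real.rpow_add (hpos p hp), Real.rpow_one]
  set Y := ∏ p ∈ P, (((p : ℝ) - 1) / (p - 2)) ^ ((n : ℝ) / p) with hY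
  have hY0 : 0 ≤ Y := Finset.prod_nonneg fun p hp => (Real.rpow_pos_of_pos (hpos p hp) _).le
  have h5 : (∏ p ∈ P, localFactor p) ^ n * (Y * Y) = weightConst (2 * n) ^ n := by
    rw [weightConst, ← hP, hY, ← Finset.prod_mul_distrib, ← Finset.prod_pow, ← Finset.prod_pow,
      ← Finset.prod_mul_distrib]
    refine Finset.prod_congr rfl fun p hp => ?_
    rw [← localFactor_mul_rpow (three_le_of_mem_oddPrimes hp), mul_pow,
      ← Real.rpow_add (hpos p hp), ← Real.rpow_mul_natCast (hpos p hp).le]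
    congr 2
    ring
  have h6 : ∀ v : ℕ → ℕ, ∏ a ∈ Finset.range n, primeWeight (2 * n) (v a) ≤
      ∏ p ∈ P, (((p : ℝ) - 1) / (p - 2)) ^ ((n : ℝ) / p + 1) →
      ∏ a ∈ Finset.range n, primeWeight (2 * n) (v a) ≤ Y * (2 * n) := fun v hv =>
    hv.trans (h4.le.trans (mul_le_mul_of_nonneg_left h3 hY0))
  have h7 := h6 _ h1
  have h8 := h6 _ h2
  calc _ ≤ (∏ p ∈ P, localFactor p) ^ n * ((Y * (2 * n)) * (Y * (2 * n))) := by
        refine mul_le_mul_of_nonneg_left (mul_le_mul h7 h8 ?_ ?_)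
          (pow_nonneg (Finset.prod_nonneg fun p hp => (hF p hp).le) n)
        · exact Finset.prod_nonneg fun a _ => zero_le_one.trans (one_le_primeWeight _ _)
        · positivity
    _ = _ := by
        rw [← h5]
        ring

theorem coprimeOddBijCount_eq_sum (n : ℕ) :
    (coprimeOddBijCount n : ℝ) = ∑ σ : Equiv.Perm (Fin n), ∏ i : Fin n,
      coprimeInd (2 * n) (2 * i + 1) ((σ i : ℕ) + 1) := by
  classical
  have h : ∀ σ : Equiv.Perm (Fin n),
      ∏ i : Fin n, coprimeInd (2 * n) (2 * i + 1) ((σ i : ℕ) + 1) =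
      if ∀ i : Fin n, Nat.gcd (2 * i.1 + 1) ((σ i).1 + 1) = 1 then (1 : ℝ) else 0 := by
    intro σ
    have e : ∀ i : Fin n, coprimeInd (2 * n) (2 * i + 1) ((σ i : ℕ) + 1) =
        if Nat.gcd (2 * i.1 + 1) ((σ i).1 + 1) = 1 then 1 else 0 := fun i =>
      coprimeInd_odd _ _ _ (odd_two_mul_add_one _) (by omega)
    simp only [e]
    split_ifs with hσ
    · exact Finset.prod_eq_one fun i _ => if_pos (hσ i)
    · obtain ⟨i, hi⟩ := not_forall.1 hσ
      exact Finset.prod_eq_zero (Finset.mem_univ i) (if_neg hi)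
  simp only [h]
  rw [Finset.sum_boole, coprimeOddBijCount, Nat.card_eq_fintype_card, Fintype.card_subtype]

theorem abs_weighted_sum_sub_one_le {n : ℕ} (hn : 1 ≤ n) {v : ℕ → ℕ} (hv : CountsWell n v)
    {D W : ℝ} (hD1 : 1 ≤ D)
    (hD : ∏ p ∈ oddPrimes (2 * n), (1 + 1 / ((p : ℝ) - 2) / (p : ℝ) ^ (1 / 4 : ℝ)) ≤ D)
    (u : ℕ) (hu : u ≠ 0) (hW : (2 : ℝ) ^ u.primeFactors.card ≤ W) :
    |∑ a ∈ Finset.range n, primeWeight (2 * n) u * primeWeight (2 * n) (v a) *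
      coprimeInd (2 * n) u (v a) / (n * weightConst (2 * n)) - 1| ≤
      W / n * ((2 * n : ℝ) ^ (1 / 4 : ℝ) * (W * D)) := by
  have key := weighted_sum_approx hv hD u hu
  set S := ∑ a ∈ Finset.range n, primeWeight (2 * n) (v a) * coprimeInd (2 * n) u (v a)
  have hn0 : (0 : ℝ) < n := by exact_mod_cast hn
  have hK := one_le_weightConst (2 * n)
  have hh := one_le_primeWeight (2 * n) u
  have hK0 : 0 < weightConst (2 * n) := by linarith
  have hh0 : 0 < primeWeight (2 * n) u := by linarith
  have hW0 : 0 ≤ W := le_trans (by positivity) hW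
  have e : ∑ a ∈ Finset.range n, primeWeight (2 * n) u * primeWeight (2 * n) (v a) *
      coprimeInd (2 * n) u (v a) / (n * weightConst (2 * n)) - 1 =
      primeWeight (2 * n) u / (n * weightConst (2 * n)) *
        (S - n * (weightConst (2 * n) / primeWeight (2 * n) u)) := by
    have : ∀ a, primeWeight (2 * n) u * primeWeight (2 * n) (v a) *
        coprimeInd (2 * n) u (v a) / (n * weightConst (2 * n)) =
        primeWeight (2 * n) u / (n * weightConst (2 * n)) *
          (primeWeight (2 * n) (v a) * coprimeInd (2 * n) u (v a)) := fun a => by ring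
    rw [Finset.sum_congr rfl fun a _ => this a, ← Finset.mul_sum, mul_sub]
    congr 1
    field_simp
  rw [e, abs_mul, abs_of_pos (by positivity)]
  refine mul_le_mul ?_ (key.trans ?_) (abs_nonneg _) (by positivity)
  · refine div_le_div₀ hW0 ((primeWeight_le _ u hu).trans hW) hn0 ?_
    exact le_mul_of_one_le_right hn0.le hK
  · gcongr

theorem coprimeOddBijCount_lower_of_params (n : ℕ) (hn : 1 ≤ n) (D W V δ c η : ℝ) (hD1 : 1 ≤ D)
    (hD : ∏ p ∈ oddPrimes (2 * n), (1 + 1 / ((p : ℝ) - 2) / (p : ℝ) ^ (1 / 4 : ℝ)) ≤ D)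
    (hW : ∀ m : ℕ, m ≠ 0 → m ≤ 2 * n → (2 : ℝ) ^ m.primeFactors.card ≤ W)
    (hV : ∀ m : ℕ, m ≠ 0 → m ≤ n ^ 2 → (2 : ℝ) ^ m.primeFactors.card ≤ V)
    (hδ : W / n * ((2 * n : ℝ) ^ (1 / 4 : ℝ) * (W * D)) ≤ δ) (hδ1 : δ ≤ 1 / 2)
    (hc0 : 0 < c) (hc : c ≤ n / V - (2 * n : ℝ) ^ (1 / 4 : ℝ) * V) (hη1 : η ≤ 1)
    (hη : 12 * δ ≤ η * (1 / (n * D) * c)) :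
    Real.exp (-(n : ℝ)) * ((n : ℝ) ^ n * (∏ p ∈ oddPrimes (2 * n), localFactor p) ^ n) ≤
      ((1 + η) / (1 - δ)) ^ n * ((2 * n) ^ 2 * coprimeOddBijCount n) := by
  have hn0 : (0 : ℝ) < n := by exact_mod_cast hn
  set K := weightConst (2 * n) with hKdef
  have hK : 1 ≤ K := one_le_weightConst (2 * n)
  have hKD : K ≤ D := weightConst_le _ hD
  have hh := one_le_primeWeight (2 * n)
  have hh0 : ∀ m, 0 < primeWeight (2 * n) m := fun m => by linarith [hh m]
  have hs : ∀ i j : Fin n, coprimeInd (2 * n) (2 * i + 1) ((j : ℕ) + 1) = 0 ∨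
      coprimeInd (2 * n) (2 * i + 1) ((j : ℕ) + 1) = 1 := by
    intro i j
    rw [coprimeInd_odd _ _ _ (odd_two_mul_add_one _) (by omega)]
    split_ifs <;> simp
  have hs0 : ∀ i j : Fin n, 0 ≤ coprimeInd (2 * n) (2 * i + 1) ((j : ℕ) + 1) := fun i j => by
    rcases hs i j with h | h <;> simp [h]
  have hδ0 : 0 ≤ δ := by
    have hW0 : 0 ≤ W := le_trans (by positivity) (hW 1 one_ne_zero (by omega))
    exact le_trans (by positivity) hδ
  have hrow : ∀ i : Fin n, |∑ j : Fin n, primeWeight (2 * n) (2 * i + 1) *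
      primeWeight (2 * n) ((j : ℕ) + 1) * coprimeInd (2 * n) (2 * i + 1) ((j : ℕ) + 1) /
        (n * K) - 1| ≤ δ := by
    intro i
    rw [Fin.sum_univ_eq_sum_range (fun a => primeWeight (2 * n) (2 * i + 1) *
      primeWeight (2 * n) (a + 1) * coprimeInd (2 * n) (2 * i + 1) (a + 1) / (n * K)) n]
    exact (abs_weighted_sum_sub_one_le hn (countsWell_succ n) hD1 hD _ (by omega)
      (hW _ (by omega) (by omega))).trans hδ
  have hcol : ∀ j : Fin n, |∑ i : Fin n, primeWeight (2 * n) (2 * i + 1) *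
      primeWeight (2 * n) ((j : ℕ) + 1) * coprimeInd (2 * n) (2 * i + 1) ((j : ℕ) + 1) /
        (n * K) - 1| ≤ δ := by
    intro j
    simp only [mul_comm (primeWeight (2 * n) _) (primeWeight (2 * n) ((j : ℕ) + 1)),
      coprimeInd_comm _ _ ((j : ℕ) + 1)]
    rw [Fin.sum_univ_eq_sum_range (fun a => primeWeight (2 * n) ((j : ℕ) + 1) *
      primeWeight (2 * n) (2 * a + 1) * coprimeInd (2 * n) ((j : ℕ) + 1) (2 * a + 1) /
        (n * K)) n]
    exact (abs_weighted_sum_sub_one_le hn (countsWell_odd n) hD1 hD _ (by omega)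
      (hW _ (by omega) (by omega))).trans hδ
  have hcn : ∀ j j' : Fin n, c ≤ ∑ i : Fin n, coprimeInd (2 * n) (2 * i + 1) ((j : ℕ) + 1) *
      coprimeInd (2 * n) (2 * i + 1) ((j' : ℕ) + 1) := by
    intro j j'
    simp only [coprimeInd_comm _ (2 * _ + 1), ← coprimeInd_mul]
    rw [Fin.sum_univ_eq_sum_range (fun a =>
      coprimeInd (2 * n) (((j : ℕ) + 1) * ((j' : ℕ) + 1)) (2 * a + 1)) n]
    refine le_trans ?_ (coprime_count_lower (countsWell_odd n) _ (by positivity))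
    have hle : ((j : ℕ) + 1) * ((j' : ℕ) + 1) ≤ n ^ 2 := by
      rw [sq]
      exact Nat.mul_le_mul j.2 j'.2
    have h := hV _ (by positivity : ((j : ℕ) + 1) * ((j' : ℕ) + 1) ≠ 0) hle
    exact hc.trans (by gcongr)
  have main := permanent_lower_of_approx (n := n)
    (fun i j => primeWeight (2 * n) (2 * i + 1) * primeWeight (2 * n) ((j : ℕ) + 1) *
      coprimeInd (2 * n) (2 * i + 1) ((j : ℕ) + 1) / (n * K))
    (fun i j => by have := hs0 i j; have := hh0 (2 * i + 1); have := hh0 (j + 1); positivity)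
    δ (1 / (n * D)) c η hδ0 hδ1 (by positivity) hc0 hη1 hη
    (fun i j => coprimeInd (2 * n) (2 * i + 1) ((j : ℕ) + 1)) hs ?_ hrow hcol hcn
  · have e : ∑ σ : Equiv.Perm (Fin n), ∏ i : Fin n, (primeWeight (2 * n) (2 * i + 1) *
        primeWeight (2 * n) ((σ i : ℕ) + 1) *
        coprimeInd (2 * n) (2 * i + 1) ((σ i : ℕ) + 1) / (n * K)) =
        ((∏ a ∈ Finset.range n, primeWeight (2 * n) (2 * a + 1)) *
          ∏ a ∈ Finset.range n, primeWeight (2 * n) (a + 1)) / (n * K) ^ n *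
          coprimeOddBijCount n := by
      rw [coprimeOddBijCount_eq_sum, Finset.mul_sum]
      refine Finset.sum_congr rfl fun σ _ => ?_
      rw [Finset.prod_div_distrib, Finset.prod_mul_distrib, Finset.prod_mul_distrib,
        Equiv.prod_comp σ fun j : Fin n => primeWeight (2 * n) ((j : ℕ) + 1),
        Fin.prod_univ_eq_prod_range (fun a => primeWeight (2 * n) (2 * a + 1)) n,
        Fin.prod_univ_eq_prod_range (fun a => primeWeight (2 * n) (a + 1)) n, Finset.prod_const,
        Finset.card_univ, Fintype.card_fin]
      ring
    simp only [e] at main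
    have hw := prod_primeWeight_mul_le n hn
    set H := (∏ a ∈ Finset.range n, primeWeight (2 * n) (2 * a + 1)) *
      ∏ a ∈ Finset.range n, primeWeight (2 * n) (a + 1)
    set T := (∏ p ∈ oddPrimes (2 * n), localFactor p) ^ n
    have hT : 0 ≤ T := pow_nonneg (Finset.prod_nonneg fun p hp =>
      (localFactor_pos (three_le_of_mem_oddPrimes hp)).le) n
    have hη0 : 0 ≤ η := by
      by_contra hneg
      have : η * (1 / (n * D) * c) < 0 := mul_neg_of_neg_of_pos (not_le.1 hneg) (by positivity)
      linarith
    have hR : 0 ≤ ((1 + η) / (1 - δ)) ^ n :=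
      pow_nonneg (div_nonneg (by linarith) (by linarith)) n
    set R := ((1 + η) / (1 - δ)) ^ n
    have hKn : 0 < K ^ n := by positivity
    calc Real.exp (-(n : ℝ)) * ((n : ℝ) ^ n * T)
        ≤ R * (H / (n * K) ^ n * coprimeOddBijCount n) * ((n : ℝ) ^ n * T) :=
          mul_le_mul_of_nonneg_right main (by positivity)
      _ = R * coprimeOddBijCount n / K ^ n * (T * H) := by
          rw [mul_pow]
          field_simp
      _ ≤ R * coprimeOddBijCount n / K ^ n * (K ^ n * (2 * n) ^ 2) :=
          mul_le_mul_of_nonneg_left hw (by positivity)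
      _ = _ := by
          field_simp
  · intro i j
    have h1 : 1 / (n * D) ≤ 1 / (n * K) := by gcongr
    have h2 : 1 ≤ primeWeight (2 * n) (2 * i + 1) * primeWeight (2 * n) ((j : ℕ) + 1) :=
      one_le_mul_of_one_le_of_one_le (hh _) (hh _)
    calc _ ≤ 1 / (n * K) * coprimeInd (2 * n) (2 * i + 1) ((j : ℕ) + 1) :=
          mul_le_mul_of_nonneg_right h1 (hs0 i j)
      _ ≤ 1 / (n * K) * (primeWeight (2 * n) (2 * i + 1) * primeWeight (2 * n) ((j : ℕ) + 1) *
          coprimeInd (2 * n) (2 * i + 1) ((j : ℕ) + 1)) := by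
          refine mul_le_mul_of_nonneg_left ?_ (by positivity)
          exact le_mul_of_one_le_left (hs0 i j) h2
      _ = _ := by ring

theorem factorial_le (n : ℕ) (hn : 1 ≤ n) :
    (n.factorial : ℝ) ≤ Real.exp 1 * n * (Real.exp (-(n : ℝ)) * (n : ℝ) ^ n) := by
  induction n, hn using Nat.le_induction with
  | base => simp [← Real.exp_add]
  | succ n hn ih =>
    have hn0 : (0 : ℝ) < n := by exact_mod_cast hn
    have h1 : Real.exp 1 ≤ (((n : ℝ) + 1) / n) ^ (n + 1) := by
      have h2 := Real.one_sub_inv_le_log_of_pos (show 0 < ((n : ℝ) + 1) / n by positivity)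
      have h3 : 1 - (((n : ℝ) + 1) / n)⁻¹ = 1 / (n + 1) := by
        field_simp
        ring
      rw [h3, div_le_iff₀ (by positivity)] at h2
      calc Real.exp 1 ≤ Real.exp (Real.log (((n : ℝ) + 1) / n) * (n + 1)) :=
            Real.exp_le_exp.2 h2
        _ = _ := by
          rw [mul_comm, ← Nat.cast_add_one, Real.exp_nat_mul, Real.exp_log (by positivity)]
    rw [div_pow, le_div_iff₀ (by positivity)] at h1
    rw [Nat.factorial_succ]
    push_cast
    have e1 : Real.exp (-((n : ℝ) + 1)) = Real.exp (-(n : ℝ)) * (Real.exp 1)⁻¹ := by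
      rw [neg_add, Real.exp_add, Real.exp_neg 1]
    have hexp := Real.exp_pos 1
    calc ((n : ℝ) + 1) * n.factorial
        ≤ (n + 1) * (Real.exp 1 * n * (Real.exp (-(n : ℝ)) * (n : ℝ) ^ n)) := by gcongr
      _ = (n + 1) * Real.exp (-(n : ℝ)) * (Real.exp 1 * (n : ℝ) ^ (n + 1)) := by ring
      _ ≤ (n + 1) * Real.exp (-(n : ℝ)) * ((n : ℝ) + 1) ^ (n + 1) := by gcongr
      _ = _ := by
        rw [e1]
        field_simp

theorem rpow_neg_le_ap_rpow {n : ℕ} (hn : 1 ≤ Real.log (Real.log n)) :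
    Real.exp (-(Real.log n / 16)) ≤ ap n ^ ((1 : ℝ) / 4) := by
  have hl : 0 ≤ Real.log n := Real.log_natCast_nonneg n
  have hk0 : 0 ≤ kp n := by
    rw [kp]
    positivity
  have h1 : kp n * Real.log (kp n) ≤ kp n * kp n :=
    mul_le_mul_of_nonneg_left (Real.log_le_self hk0) hk0
  have h2 : kp n * kp n = Real.log n / Real.log (Real.log n) / 1024 := by
    have h := Real.mul_self_sqrt (div_nonneg hl (by linarith : 0 ≤ Real.log (Real.log n)))
    calc kp n * kp n = Real.sqrt (Real.log n / Real.log (Real.log n)) *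
          Real.sqrt (Real.log n / Real.log (Real.log n)) / 1024 := by
          rw [kp]
          norm_num
          ring
      _ = _ := by rw [h]
  have h3 : Real.log n / Real.log (Real.log n) ≤ Real.log n := div_le_self hl hn
  rw [ap, ← Real.exp_mul]
  refine Real.exp_le_exp.2 ?_
  linarith

theorem one_add_div_one_sub_pow_le {η δ : ℝ} (hδ : 0 ≤ δ) (hδ1 : δ ≤ 1 / 2) (hη : 0 ≤ η)
    (h : δ ≤ η) (n : ℕ) : ((1 + η) / (1 - δ)) ^ n ≤ Real.exp (3 * (n * η)) := by
  have h1 : (1 + η) / (1 - δ) ≤ Real.exp (3 * η) := by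
    have h2 : 1 / (1 - δ) ≤ 1 + 2 * δ := by
      rw [div_le_iff₀ (by linarith)]
      nlinarith
    calc (1 + η) / (1 - δ) = (1 + η) * (1 / (1 - δ)) := by ring
      _ ≤ Real.exp η * Real.exp (2 * δ) := by
        refine mul_le_mul ?_ (h2.trans ?_) (div_nonneg zero_le_one (by linarith))
          (Real.exp_pos _).le
        · linarith [Real.add_one_le_exp η]
        · linarith [Real.add_one_le_exp (2 * δ)]
      _ = Real.exp (η + 2 * δ) := (Real.exp_add _ _).symm
      _ ≤ _ := Real.exp_le_exp.2 (by linarith)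
  calc _ ≤ Real.exp (3 * η) ^ n :=
        pow_le_pow_left₀ (div_nonneg (by linarith) (by linarith)) h1 n
    _ = _ := by
      rw [← Real.exp_nat_mul]
      congr 1
      ring

theorem rpow_eq_pow_of_pow_eq {x y : ℝ} (hy : 0 ≤ y) (hxy : x = y ^ 16) (m : ℕ) {r : ℝ}
    (hr : r = m / 16) : x ^ r = y ^ m := by
  rw [hxy, ← Real.rpow_natCast_mul hy, ← Real.rpow_natCast y m, hr]
  congr 1
  push_cast
  ring

theorem four_mul_pow_mul_exp_le {y : ℝ} (hy : 3 ≤ y) :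
    4 * (y ^ 16) ^ 3 * Real.exp (3 * y ^ 12 + 1) ≤ Real.exp (y ^ 15) := by
  have h1 : y ^ 12 ≤ Real.exp (y ^ 12) := by linarith [Real.add_one_le_exp (y ^ 12)]
  have h2 : (4 : ℝ) ≤ Real.exp 3 := by linarith [Real.add_one_le_exp (3 : ℝ)]
  calc 4 * (y ^ 16) ^ 3 * Real.exp (3 * y ^ 12 + 1)
      = 4 * (y ^ 12) ^ 4 * Real.exp (3 * y ^ 12 + 1) := by ring
    _ ≤ Real.exp 3 * Real.exp (y ^ 12) ^ 4 * Real.exp (3 * y ^ 12 + 1) := by gcongr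
    _ = Real.exp (7 * y ^ 12 + 4) := by
      rw [← Real.exp_nat_mul, ← Real.exp_add, ← Real.exp_add]
      congr 1
      push_cast
      ring
    _ ≤ _ := by
      refine Real.exp_le_exp.2 ?_
      have h3 : (3 : ℝ) ^ 3 ≤ y ^ 3 := by gcongr
      have h4 : (1 : ℝ) ≤ y ^ 12 := one_le_pow₀ (by linarith)
      have e : y ^ 15 = y ^ 3 * y ^ 12 := by ring
      rw [e]
      nlinarith

theorem coprimeOddBijCount_lower_of_large {C D y : ℝ} (hC : 1 ≤ C) (hD1 : 1 ≤ D) (n : ℕ)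
    (hn : 1 ≤ n) (hω : ∀ m : ℕ, m ≠ 0 → (2 : ℝ) ^ m.primeFactors.card ≤
      C * (m : ℝ) ^ (1 / 16 : ℝ))
    (hD : ∏ p ∈ oddPrimes (2 * n), (1 + 1 / ((p : ℝ) - 2) / (p : ℝ) ^ (1 / 4 : ℝ)) ≤ D)
    (hy3 : 3 ≤ y) (hny : (n : ℝ) = y ^ 16) (hyC : C * (1 + 2 * C) ≤ y) (hyD : 12 * D ≤ y)
    (hyCD : 2 * C ^ 2 * D ≤ y) :
    (n.factorial : ℝ) * coprimeConstOdd ^ n ≤ Real.exp (y ^ 15) * coprimeOddBijCount n := by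
  have hy0 : 0 < y := by linarith
  have hn0 : (0 : ℝ) < n := by exact_mod_cast hn
  have h2 : ∀ r : ℝ, 0 ≤ r → r ≤ 1 → (2 : ℝ) ^ r ≤ 2 := fun r _ hr => by
    simpa using Real.rpow_le_rpow_of_exponent_le (x := 2) (by norm_num) hr
  have e4 : (2 * n : ℝ) ^ (1 / 4 : ℝ) = 2 ^ (1 / 4 : ℝ) * y ^ 4 := by
    rw [Real.mul_rpow (by norm_num) hn0.le,
      rpow_eq_pow_of_pow_eq hy0.le hny 4 (r := 1 / 4) (by norm_num)]
  have e1 : (2 * n : ℝ) ^ (1 / 16 : ℝ) = 2 ^ (1 / 16 : ℝ) * y := by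
    rw [Real.mul_rpow (by norm_num) hn0.le,
      rpow_eq_pow_of_pow_eq hy0.le hny 1 (r := 1 / 16) (by norm_num), pow_one]
  have key := coprimeOddBijCount_lower_of_params n hn D (C * (2 * n : ℝ) ^ (1 / 16 : ℝ))
    (C * y ^ 2) (1 / y ^ 8) (y ^ 13) (1 / y ^ 4) hD1 hD ?_ ?_ ?_ ?_ (by positivity) ?_ ?_ ?_
  · have hR := one_add_div_one_sub_pow_le (η := 1 / y ^ 4) (δ := 1 / y ^ 8) (by positivity)
      ?_ (by positivity) ?_ n
    · have e : (n : ℝ) * (1 / y ^ 4) = y ^ 12 := by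
        rw [hny]
        field_simp
      rw [e] at hR
      obtain ⟨hc0, hc1⟩ := coprimeConstOdd_le (2 * n)
      have hcn := pow_le_pow_left₀ hc0 hc1 n
      have hexp := four_mul_pow_mul_exp_le hy3
      rw [← hny] at hexp
      have hT : 0 ≤ (∏ p ∈ oddPrimes (2 * n), localFactor p) ^ n := le_trans (by positivity) hcn
      calc (n.factorial : ℝ) * coprimeConstOdd ^ n
          ≤ (Real.exp 1 * n * (Real.exp (-(n : ℝ)) * (n : ℝ) ^ n)) *
            (∏ p ∈ oddPrimes (2 * n), localFactor p) ^ n :=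
            mul_le_mul (factorial_le n hn) hcn (by positivity) (by positivity)
        _ = Real.exp 1 * n * (Real.exp (-(n : ℝ)) * ((n : ℝ) ^ n *
            (∏ p ∈ oddPrimes (2 * n), localFactor p) ^ n)) := by ring
        _ ≤ Real.exp 1 * n * (Real.exp (3 * y ^ 12) * ((2 * n) ^ 2 * coprimeOddBijCount n)) := by
            refine mul_le_mul_of_nonneg_left (key.trans ?_) (by positivity)
            exact mul_le_mul_of_nonneg_right hR (by positivity)
        _ = 4 * (n : ℝ) ^ 3 * Real.exp (3 * y ^ 12 + 1) * coprimeOddBijCount n := by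
            rw [Real.exp_add]
            ring
        _ ≤ _ := by gcongr
    · rw [div_le_div_iff₀ (by positivity) (by norm_num), one_mul, one_mul]
      calc (2 : ℝ) ≤ y := by linarith
        _ ≤ y ^ 8 := le_self_pow₀ (by linarith) (by norm_num)
    · gcongr
      · linarith
      · norm_num
  · intro m hm hmn
    refine (hω m hm).trans ?_
    have : (m : ℝ) ≤ 2 * n := by exact_mod_cast hmn
    gcongr
  · intro m hm hmn
    refine (hω m hm).trans ?_
    have h3 : (m : ℝ) ≤ (y ^ 2) ^ 16 := by
      calc (m : ℝ) ≤ (n : ℝ) ^ 2 := by exact_mod_cast hmn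
        _ = _ := by
          rw [hny]
          ring
    have h4 : (m : ℝ) ^ (1 / 16 : ℝ) ≤ ((y ^ 2) ^ 16) ^ (1 / 16 : ℝ) := by gcongr
    rw [rpow_eq_pow_of_pow_eq (by positivity) rfl 1 (r := 1 / 16) (by norm_num), pow_one] at h4
    gcongr
  · rw [e4, e1, hny]
    have h3 : (2 : ℝ) ^ (1 / 16 : ℝ) * 2 ^ (1 / 16 : ℝ) * 2 ^ (1 / 4 : ℝ) ≤ 2 := by
      rw [← Real.rpow_add (by norm_num), ← Real.rpow_add (by norm_num)]
      exact h2 _ (by norm_num) (by norm_num)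
    rw [le_div_iff₀ (by positivity)]
    calc _ = C ^ 2 * D * ((2 : ℝ) ^ (1 / 16 : ℝ) * 2 ^ (1 / 16 : ℝ) * 2 ^ (1 / 4 : ℝ)) / y ^ 2 := by
          field_simp
      _ ≤ C ^ 2 * D * 2 / y ^ 2 := by gcongr
      _ ≤ 1 := by
          rw [div_le_one (by positivity)]
          nlinarith
  · rw [div_le_div_iff₀ (by positivity) (by norm_num), one_mul, one_mul]
    calc (2 : ℝ) ≤ y := by linarith
      _ ≤ y ^ 8 := le_self_pow₀ (by linarith) (by norm_num)
  · rw [e4, hny, le_sub_iff_add_le, le_div_iff₀ (by positivity)]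
    have h3 := h2 (1 / 4) (by norm_num) (by norm_num)
    have h4 : y ^ 6 ≤ y ^ 13 := pow_le_pow_right₀ (by linarith) (by norm_num)
    calc (y ^ 13 + 2 ^ (1 / 4 : ℝ) * y ^ 4 * (C * y ^ 2)) * (C * y ^ 2)
        = (y ^ 13 + 2 ^ (1 / 4 : ℝ) * (C * y ^ 6)) * (C * y ^ 2) := by ring
      _ ≤ (y ^ 13 + 2 * (C * y ^ 13)) * (C * y ^ 2) := by gcongr
      _ = (C * (1 + 2 * C)) * y ^ 15 := by ring
      _ ≤ y * y ^ 15 := by gcongr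
      _ = y ^ 16 := by ring
  · rw [div_le_one (by positivity)]
    exact one_le_pow₀ (by linarith)
  · rw [hny]
    have e : 1 / y ^ 4 * (1 / (y ^ 16 * D) * y ^ 13) = 1 / (y ^ 7 * D) := by
      field_simp
    rw [e, mul_one_div, div_le_div_iff₀ (by positivity) (by positivity)]
    calc 12 * (y ^ 7 * D) = (12 * D) * y ^ 7 := by ring
      _ ≤ y * y ^ 7 := by gcongr
      _ = _ := by ring

/-- For all sufficiently large `n`,
`C₀(n) ≥ exp(−n·α^{1/4}) · n! · (∏_{p > 2} (p−1)^{2(1−1/p)}/(p·(p−2)^{1−2/p}))^n`. -/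
theorem coprimeOddBijCount_lower :
    ∃ N : ℕ, ∀ n : ℕ, N ≤ n →
      Real.exp (-(n : ℝ) * ap n ^ ((1 : ℝ) / 4)) * (n.factorial : ℝ) * coprimeConstOdd ^ n
        ≤ (coprimeOddBijCount n : ℝ) := by
  obtain ⟨C, hC, hω⟩ := exists_two_pow_card_primeFactors_le (1 / 16) (by norm_num)
  obtain ⟨D, hD1, hD⟩ := exists_prod_one_add_le
  have ht : Filter.Tendsto (fun n : ℕ => (n : ℝ) ^ (1 / 16 : ℝ)) Filter.atTop Filter.atTop :=
    (tendsto_rpow_atTop (by norm_num)).comp tendsto_natCast_atTop_atTop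
  have hl : Filter.Tendsto (fun n : ℕ => Real.log (Real.log n)) Filter.atTop Filter.atTop :=
    Real.tendsto_log_atTop.comp (Real.tendsto_log_atTop.comp tendsto_natCast_atTop_atTop)
  rw [← Filter.eventually_atTop]
  filter_upwards [ht.eventually_ge_atTop 3, ht.eventually_ge_atTop (C * (1 + 2 * C)),
    ht.eventually_ge_atTop (12 * D), ht.eventually_ge_atTop (2 * C ^ 2 * D),
    hl.eventually_ge_atTop 1, Filter.eventually_ge_atTop 1] with n h1 h2 h3 h4 h5 hn
  have hn0 : (0 : ℝ) < n := by exact_mod_cast hn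
  set y := (n : ℝ) ^ (1 / 16 : ℝ) with hy
  have hy0 : 0 < y := by linarith
  have hny : (n : ℝ) = y ^ 16 := by
    rw [hy, ← Real.rpow_mul_natCast hn0.le]
    norm_num
  have key := coprimeOddBijCount_lower_of_large hC hD1 n hn hω (hD (2 * n)) h1 hny h2 h3 h4
  have hα := rpow_neg_le_ap_rpow h5
  have e : Real.exp (-(Real.log n / 16)) = 1 / y := by
    rw [hy, Real.rpow_def_of_pos hn0, one_div, ← Real.exp_neg]
    congr 1
    ring
  rw [e] at hα
  have h6 : y ^ 15 ≤ n * ap n ^ ((1 : ℝ) / 4) := by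
    calc y ^ 15 = n * (1 / y) := by
          rw [hny]
          field_simp
      _ ≤ _ := by gcongr
  calc _ = Real.exp (-(n * ap n ^ ((1 : ℝ) / 4))) *
        ((n.factorial : ℝ) * coprimeConstOdd ^ n) := by
        rw [neg_mul]
        ring
    _ ≤ Real.exp (-(n * ap n ^ ((1 : ℝ) / 4))) *
        (Real.exp (y ^ 15) * coprimeOddBijCount n) :=
        mul_le_mul_of_nonneg_left key (Real.exp_pos _).le
    _ = Real.exp (-(n * ap n ^ ((1 : ℝ) / 4)) + y ^ 15) * coprimeOddBijCount n := by
        rw [Real.exp_add]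
        ring
    _ ≤ 1 * coprimeOddBijCount n := by
        refine mul_le_mul_of_nonneg_right ?_ (Nat.cast_nonneg _)
        exact Real.exp_le_one_iff.2 (by linarith)
    _ = _ := one_mul _
end

section
/- Fix an integer k ≥ 2, and let C_k(n) denote the number of permutations σ of [n] = {1,…,n} such that gcd(ℓ, σ(ℓ), k!) = 1 for all ℓ ∈ [n]. Then there exists a constant K = K(k) > 0 such that for all n ≥ 2, n!·(∏_{p prime, p ≤ k} (p−1)^{2(1−1/p)} / (p·(p−2)^{1−2/p}))^n · exp(−K log n) ≤ C_k(n) ≤ n!·(∏_{p prime, p ≤ k} (p−1)^{2(1−1/p)} / (p·(p−2)^{1−2/p}))^n · exp(K log n), where the factor at p = 2 is interpreted as 1/2 (equivalently, 0^0 = 1). -/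
open Real

/-- `C_k(n)`: the number of permutations `σ` of `{1, …, n}` with `gcd(ℓ, σ(ℓ), k!) = 1`
for all `ℓ ∈ {1, …, n}`. -/
noncomputable def kCoprimePermCount (k n : ℕ) : ℕ :=
  Nat.card {σ : Equiv.Perm (Fin n) //
    ∀ ℓ : Fin n, Nat.gcd (Nat.gcd (ℓ.1 + 1) ((σ ℓ).1 + 1)) k.factorial = 1}

open Finset

set_option linter.unusedSectionVars false

section Coloring

variable {α κ : Type*} [Fintype α] [DecidableEq α] [Fintype κ] [DecidableEq κ]

theorem card_perm_comp_eq_le (c f : α → κ) :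
    #{σ : Equiv.Perm α | c ∘ σ = f} ≤ ∏ s, (#{a | c a = s}).factorial := by
  have hst : #{σ : Equiv.Perm α | c ∘ σ = c} = ∏ s, (#{a | c a = s}).factorial := by
    have := DomMulAct.stabilizer_card c
    simpa only [Fintype.card_subtype] using this
  rw [← hst]
  rcases ({σ : Equiv.Perm α | c ∘ σ = f} : Finset _).eq_empty_or_nonempty with h | ⟨τ, hτ⟩
  · simp [h]
  · simp only [mem_filter, mem_univ, true_and] at hτ
    refine card_le_card_of_injOn (fun σ => σ * τ⁻¹) ?_ (fun x _ y _ h => mul_right_cancel h)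
    intro σ hσ
    simp only [coe_filter, mem_univ, true_and, Set.mem_ofPred_eq] at hσ ⊢
    rw [← hτ] at hσ
    funext a
    simpa using congrFun hσ (τ⁻¹ a)

theorem card_perm_mul_prod_le (c : α → κ) (R : κ → κ → Prop) [DecidableRel R] (y : κ → ℝ)
    (hy : ∀ s, 0 ≤ y s) :
    (Nat.card {σ : Equiv.Perm α // ∀ a, R (c a) (c (σ a))} : ℝ) * ∏ a, y (c a) ≤
      (∏ s, (#{a | c a = s}).factorial : ℕ) * ∏ a, ∑ s with R (c a) s, y s := by
  rw [Nat.card_eq_fintype_card, Fintype.card_subtype]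
  have h1 : (#{σ : Equiv.Perm α | ∀ a, R (c a) (c (σ a))} : ℝ) * ∏ a, y (c a) =
      ∑ σ : Equiv.Perm α with ∀ a, R (c a) (c (σ a)), ∏ a, y (c (σ a)) := by
    rw [sum_congr rfl (fun σ _ => Equiv.prod_comp σ (fun a => y (c a)))]
    simp
  have h2 : ∀ σ ∈ ({σ : Equiv.Perm α | ∀ a, R (c a) (c (σ a))} : Finset _),
      c ∘ σ ∈ Fintype.piFinset fun a => ({s | R (c a) s} : Finset κ) := by
    intro σ hσ
    simpa [Fintype.mem_piFinset] using hσ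
  rw [h1, ← sum_fiberwise_of_maps_to h2, prod_univ_sum, mul_sum]
  refine sum_le_sum fun f _ => ?_
  rw [sum_congr rfl (g := fun _ => ∏ a, y (f a)), sum_const, nsmul_eq_mul]
  · refine mul_le_mul_of_nonneg_right ?_ (prod_nonneg fun a _ => hy _)
    norm_cast
    refine le_trans (card_le_card ?_) (card_perm_comp_eq_le c f)
    intro σ
    simp
  · intro σ hσ
    simp only [mem_filter] at hσ
    rw [← hσ.2]
    rfl

theorem exists_perm_card_eq (c : α → κ) (N : κ → κ → ℕ)
    (hrow : ∀ r, ∑ s, N r s = #{a | c a = r}) (hcol : ∀ s, ∑ r, N r s = #{a | c a = s}) :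
    ∃ σ : Equiv.Perm α, ∀ r s, #{a | c a = r ∧ c (σ a) = s} = N r s := by
  let X := Σ x : κ × κ, Fin (N x.1 x.2)
  have hX (p : κ × κ → Prop) [DecidablePred p] :
      #{x : X | p x.1} = ∑ r, ∑ s, if p (r, s) then N r s else 0 := by
    rw [card_filter, ← univ_sigma_univ, sum_sigma, ← univ_product_univ, sum_product]
    refine sum_congr rfl fun r _ => sum_congr rfl fun s _ => ?_
    dsimp only
    split_ifs <;> simp
  have e₁ (r : κ) : Nonempty ({a // c a = r} ≃ {x : X // x.1.1 = r}) := by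
    rw [← Fintype.card_eq, Fintype.card_subtype, ← hrow, Fintype.card_subtype,
      hX (fun x => x.1 = r), sum_comm]
    simp
  have e₂ (r : κ) : Nonempty ({a // c a = r} ≃ {x : X // x.1.2 = r}) := by
    rw [← Fintype.card_eq, Fintype.card_subtype, ← hcol, Fintype.card_subtype,
      hX (fun x => x.2 = r)]
    simp
  let E₁ := Equiv.ofFiberEquiv (f := c) (g := fun x : X => x.1.1) fun r => (e₁ r).some
  let E₂ := Equiv.ofFiberEquiv (f := c) (g := fun x : X => x.1.2) fun r => (e₂ r).some
  have h₁ : ∀ a, (E₁ a).1.1 = c a :=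
    Equiv.ofFiberEquiv_map (f := c) (g := fun x : X => x.1.1) _
  have h₂ : ∀ a, (E₂ a).1.2 = c a :=
    Equiv.ofFiberEquiv_map (f := c) (g := fun x : X => x.1.2) _
  refine ⟨E₁.trans E₂.symm, fun r s => ?_⟩
  have : ∀ a, c (E₁.trans E₂.symm a) = (E₁ a).1.2 := by
    intro a; rw [← h₂]; simp
  simp only [this, ← h₁]
  rw [card_filter, Equiv.sum_comp E₁ (fun x => if x.1.1 = r ∧ x.1.2 = s then 1 else 0),
    ← card_filter, hX (fun x => x.1 = r ∧ x.2 = s)]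
  rw [Fintype.sum_eq_single r (fun x hx => by simp [hx]),
    Fintype.sum_eq_single s (fun x hx => by simp [hx])]
  simp

theorem sq_prod_factorial_le_card_perm_mul (c : α → κ) (R : κ → κ → Prop) [DecidableRel R]
    (N : κ → κ → ℕ)
    (hrow : ∀ r, ∑ s, N r s = #{a | c a = r}) (hcol : ∀ s, ∑ r, N r s = #{a | c a = s})
    (hR : ∀ r s, N r s ≠ 0 → R r s) :
    (∏ s, (#{a | c a = s}).factorial) ^ 2 ≤
      Nat.card {σ : Equiv.Perm α // ∀ a, R (c a) (c (σ a))} *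
        ∏ x : κ × κ, (N x.1 x.2).factorial := by
  rw [Nat.card_eq_fintype_card, Fintype.card_subtype]
  obtain ⟨σ₀, hσ₀⟩ := exists_perm_card_eq c N hrow hcol
  let G : Finset (Equiv.Perm α) := {σ | c ∘ σ = c}
  have hG : #G = ∏ s, (#{a | c a = s}).factorial := by
    have := DomMulAct.stabilizer_card c
    simpa only [Fintype.card_subtype] using this
  have hGmem : ∀ {g}, g ∈ G → ∀ a, c (g a) = c a := by
    intro g hg a
    exact congrFun (by simpa [G] using hg : c ∘ g = c) a
  have hGinv : ∀ {g}, g ∈ G → ∀ a, c (g⁻¹ a) = c a := by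
    intro g hg a
    rw [← hGmem hg (g⁻¹ a)]; simp
  have hH : ∏ x : κ × κ, (N x.1 x.2).factorial =
      ∏ x : κ × κ, (#{a | (c a, c (σ₀ a)) = x}).factorial := by
    refine prod_congr rfl fun x _ => ?_
    rw [← hσ₀]
    simp [Prod.ext_iff]
  rw [← hG, sq, ← card_product, hH, mul_comm]
  refine card_le_mul_card_image_of_maps_to (f := fun x => x.1 * σ₀ * x.2) ?_ _ ?_
  · rintro ⟨g, h⟩ hgh
    simp only [mem_product] at hgh
    simp only [mem_filter, mem_univ, true_and, Equiv.Perm.mul_apply]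
    intro a
    rw [hGmem hgh.1, ← hGmem hgh.2 a]
    apply hR
    rw [← hσ₀]
    exact card_ne_zero_of_mem (a := h a) (by simp)
  · intro τ _
    refine le_trans ?_ (card_perm_comp_eq_le (fun a => (c a, c (σ₀ a)))
      (fun a => (c a, c (τ a))))
    refine card_le_card_of_injOn Prod.snd ?_ ?_
    · rintro ⟨g, h⟩ hgh
      simp only [coe_filter, mem_product, Set.mem_ofPred_eq] at hgh
      obtain ⟨⟨hg, hh⟩, rfl⟩ := hgh
      simp only [coe_filter, mem_univ, true_and, Set.mem_ofPred_eq]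
      funext a
      simp [hGmem hg, hGmem hh]
    · rintro ⟨g, h⟩ hgh ⟨g₂, h₂⟩ hgh₂ (rfl : h = h₂)
      simp only [coe_filter, mem_product, Set.mem_ofPred_eq] at hgh hgh₂
      have := hgh.2.trans hgh₂.2.symm
      simpa using this
end Coloring

theorem factorial_mul_le (q t : ℕ) : (q * t).factorial ≤ q.factorial ^ t * t ^ (q * t) := by
  induction q with
  | zero => simp
  | succ q ih =>
    rw [add_mul, one_mul, ← Nat.factorial_mul_ascFactorial]
    calc _ ≤ (q.factorial ^ t * t ^ (q * t)) * (q * t + t) ^ t :=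
          Nat.mul_le_mul ih (Nat.ascFactorial_le_pow_add _ _)
      _ = _ := by
          rw [Nat.factorial_succ, mul_pow, ← Nat.succ_mul, Nat.succ_eq_add_one, mul_pow, add_mul, one_mul,
            pow_add]
          ring

theorem factorial_pow_mul_le (q t : ℕ) :
    q.factorial ^ t * t ^ (q * t) ≤ (q * t).factorial * (q * t + 1) ^ t := by
  induction q with
  | zero => simp
  | succ q ih =>
    calc (q + 1).factorial ^ t * t ^ ((q + 1) * t)
        = (q.factorial ^ t * t ^ (q * t)) * ((q + 1) * t) ^ t := by
          rw [Nat.factorial_succ, mul_pow, mul_pow, add_mul, one_mul, pow_add]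
          ring
      _ ≤ ((q * t).factorial * (q * t + 1) ^ t) * ((q + 1) * t + 1) ^ t :=
          Nat.mul_le_mul ih (Nat.pow_le_pow_left (Nat.le_succ _) _)
      _ ≤ _ := by
          refine Nat.mul_le_mul_right _ ?_
          rw [add_mul, one_mul]
          exact Nat.factorial_mul_pow_le_factorial

section Residues

variable {ι : Type*} [Fintype ι] [DecidableEq ι] (p : ι → ℕ) [∀ i, Fact (p i).Prime]

/-- The residues modulo all `p i` of the elements of `{1, …, n}`. -/
def residues (n : ℕ) (ℓ : Fin n) (i : ι) : ZMod (p i) := ((ℓ.1 + 1 : ℕ) : ZMod (p i))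

/-- Two families of residues are compatible if they have no common zero coordinate. -/
def CompatibleResidues (r s : ∀ i, ZMod (p i)) : Prop := ∀ i, ¬(r i = 0 ∧ s i = 0)

instance : DecidableRel (CompatibleResidues p) :=
  fun r s => inferInstanceAs (Decidable (∀ i, ¬(r i = 0 ∧ s i = 0)))

theorem card_residues_eq (hp : Function.Injective p) (n : ℕ) (r : ∀ i, ZMod (p i)) :
    ∃ v : ℕ, #{ℓ | residues p n ℓ = r} =
      n / ∏ i, p i + if v % ∏ i, p i < n % ∏ i, p i then 1 else 0 := by
  have hcop : Pairwise (Function.onFun Nat.Coprime p) := fun i j hij =>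
    (Nat.coprime_primes (Fact.out : (p i).Prime) (Fact.out : (p j).Prime)).2 (hp.ne hij)
  have hP : 0 < ∏ i, p i := prod_pos fun i _ => (Fact.out : (p i).Prime).pos
  have : NeZero (∏ i, p i) := ⟨hP.ne'⟩
  let e := ZMod.prodEquivPi p hcop
  let v : ℕ := (e.symm r - 1).val
  have hv : ((v : ℕ) : ZMod (∏ i, p i)) = e.symm r - 1 := ZMod.natCast_zmod_val _
  refine ⟨v, ?_⟩
  rw [← Nat.count_modEq_card n hP v, Nat.count_eq_card_filter_range, card_filter, card_filter,
    ← Fin.sum_univ_eq_sum_range (fun ℓ => if ℓ ≡ v [MOD ∏ i, p i] then 1 else 0)]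
  refine sum_congr rfl fun ℓ _ => if_congr ?_ rfl rfl
  rw [← ZMod.natCast_eq_natCast_iff, hv, eq_sub_iff_add_eq, ← e.injective.eq_iff,
    e.apply_symm_apply]
  have : e ((ℓ.1 : ZMod (∏ i, p i)) + 1) = residues p n ℓ := by
    have h : ((ℓ.1 : ZMod (∏ i, p i)) + 1) = ((ℓ.1 + 1 : ℕ) : ZMod (∏ i, p i)) := by
      push_cast; rfl
    rw [h, map_natCast]
    rfl
  rw [this]

theorem card_residues_le (hp : Function.Injective p) (n : ℕ) (r : ∀ i, ZMod (p i)) :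
    #{ℓ | residues p n ℓ = r} ≤ n / ∏ i, p i + 1 := by
  obtain ⟨v, hv⟩ := card_residues_eq p hp n r
  rw [hv]
  split_ifs <;> omega

theorem card_residues_mul (hp : Function.Injective p) (n : ℕ) (r : ∀ i, ZMod (p i)) :
    #{ℓ | residues p ((∏ i, p i) * n) ℓ = r} = n := by
  obtain ⟨v, hv⟩ := card_residues_eq p hp ((∏ i, p i) * n) r
  have hP : 0 < ∏ i, p i := prod_pos fun i _ => (Fact.out : (p i).Prime).pos
  rw [hv]
  simp [hP.ne']

theorem card_residues_apply_eq_zero (n : ℕ) (i : ι) :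
    #{ℓ | residues p n ℓ i = 0} = n / p i := by
  rw [← Nat.card_multiples n (p i), card_filter, card_filter,
    ← Fin.sum_univ_eq_sum_range (fun ℓ => if p i ∣ ℓ + 1 then 1 else 0)]
  simp only [residues, ZMod.natCast_eq_zero_iff]

theorem prod_prod_residues_ite (n : ℕ) (x y : ι → ℝ) :
    ∏ ℓ, ∏ i, (if residues p n ℓ i = 0 then x i else y i) =
      ∏ i, (x i ^ (n / p i) * y i ^ (n - n / p i)) := by
  rw [prod_comm]
  refine prod_congr rfl fun i _ => ?_
  rw [prod_ite, prod_const, prod_const, card_residues_apply_eq_zero, filter_not,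
    card_sdiff_of_subset (filter_subset _ _), card_residues_apply_eq_zero, card_univ,
    Fintype.card_fin]

theorem card_residue_pi : Fintype.card (∀ i, ZMod (p i)) = ∏ i, p i := by
  simp [ZMod.card]

theorem sum_ite_eq_zero (i : ι) (x y : ℝ) :
    ∑ s : ZMod (p i), (if s = 0 then x else y) = x + (p i - 1) * y := by
  rw [← add_sum_erase _ _ (mem_univ (0 : ZMod (p i))), if_pos rfl,
    sum_congr rfl (g := fun _ => y) (fun s hs => if_neg (ne_of_mem_erase hs)), sum_const,
    card_erase_of_mem (mem_univ _), card_univ, ZMod.card, nsmul_eq_mul,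
    Nat.cast_pred (Fact.out : (p i).Prime).pos]

theorem sum_compatible_prod (w : ι → ℝ) (r : ∀ i, ZMod (p i)) :
    ∑ s with CompatibleResidues p r s, ∏ i, (if s i = 0 then 1 else w i) =
      ∏ i, (if r i = 0 then (p i - 1) * w i else 1 + (p i - 1) * w i) := by
  have h (i : ι) : (if r i = 0 then ((p i : ℝ) - 1) * w i else 1 + (p i - 1) * w i) =
      ∑ s : ZMod (p i), if r i = 0 ∧ s = 0 then 0 else if s = 0 then 1 else w i := by
    by_cases h0 : r i = 0
    · simp only [h0, true_and, if_true]
      rw [← zero_add (((p i : ℝ) - 1) * w i), ← sum_ite_eq_zero p i]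
      refine sum_congr rfl fun s _ => ?_
      split_ifs <;> rfl
    · simp [h0, sum_ite_eq_zero]
  simp_rw [h]
  rw [Fintype.prod_sum, sum_filter]
  refine sum_congr rfl fun s _ => ?_
  split_ifs with hc
  · refine prod_congr rfl fun i _ => ?_
    rw [if_neg (hc i)]
  · obtain ⟨i, hi⟩ : ∃ i, r i = 0 ∧ s i = 0 := by simpa [CompatibleResidues] using hc
    symm
    exact prod_eq_zero (mem_univ i) (if_pos hi)

theorem card_compatible_perm_mul_le (hp : Function.Injective p) (n : ℕ) (w : ι → ℝ)
    (hw : ∀ i, 0 ≤ w i) :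
    (Nat.card {σ : Equiv.Perm (Fin n) // ∀ ℓ,
        CompatibleResidues p (residues p n ℓ) (residues p n (σ ℓ))} : ℝ) *
        ∏ i, w i ^ (n - n / p i) ≤
      ((n / ∏ i, p i + 1).factorial : ℝ) ^ (∏ i, p i) *
        ∏ i, (((p i - 1) * w i) ^ (n / p i) * (1 + (p i - 1) * w i) ^ (n - n / p i)) := by
  have key := card_perm_mul_prod_le (residues p n) (CompatibleResidues p)
    (fun s => ∏ i, (if s i = 0 then 1 else w i))
    (fun s => prod_nonneg fun i _ => by split_ifs <;> [exact zero_le_one; exact hw i])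
  rw [prod_congr rfl fun ℓ _ => sum_compatible_prod p w (residues p n ℓ),
    prod_prod_residues_ite, prod_prod_residues_ite] at key
  simp only [one_pow, one_mul] at key
  refine le_trans key (mul_le_mul_of_nonneg_right ?_ ?_)
  · rw [Nat.cast_prod]
    refine (prod_le_prod (fun _ _ => Nat.cast_nonneg _) fun r _ => Nat.cast_le.2 <|
      Nat.factorial_le (card_residues_le p hp n r)).trans_eq ?_
    rw [prod_const, card_univ, card_residue_pi]
  · refine prod_nonneg fun i _ => ?_
    have h1 : (1 : ℝ) ≤ p i := by exact_mod_cast (Fact.out : (p i).Prime).pos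
    have := mul_nonneg (sub_nonneg.2 h1) (hw i)
    positivity

/-- The weight of a pair of residues modulo `p i` in an optimal coupling, scaled to an integer. -/
def pairWeight (i : ι) (x y : ZMod (p i)) : ℕ :=
  if x = 0 ∧ y = 0 then 0 else if x = 0 ∨ y = 0 then p i - 1 else p i - 2

theorem pairWeight_comm (i : ι) (x y : ZMod (p i)) : pairWeight p i x y = pairWeight p i y x := by
  simp [pairWeight, and_comm, or_comm]

theorem sum_pairWeight (i : ι) (x : ZMod (p i)) : ∑ y, pairWeight p i x y = (p i - 1) ^ 2 := by
  have h2 : 2 ≤ p i := (Fact.out : (p i).Prime).two_le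
  obtain ⟨a, ha⟩ := Nat.exists_eq_add_of_le h2
  have hcard : #(univ.erase (0 : ZMod (p i))) = a + 1 := by
    rw [card_erase_of_mem (mem_univ _), card_univ, ZMod.card]; omega
  rw [← add_sum_erase _ _ (mem_univ (0 : ZMod (p i)))]
  have e1 : p i - 1 = a + 1 := by omega
  have e2 : p i - 2 = a := by omega
  by_cases hx : x = 0
  · rw [sum_congr rfl (g := fun _ => p i - 1)
      (fun s hs => by simp [pairWeight, hx, ne_of_mem_erase hs]), sum_const, hcard, e1]
    simp [pairWeight, hx, sq]
  · rw [sum_congr rfl (g := fun _ => p i - 2)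
      (fun s hs => by simp [pairWeight, hx, ne_of_mem_erase hs]), sum_const, hcard, e2]
    simp [pairWeight, hx, e1]
    ring

/-- The product over all `i` of the weights `pairWeight`. -/
def couplingWeight (r s : ∀ i, ZMod (p i)) : ℕ := ∏ i, pairWeight p i (r i) (s i)

theorem couplingWeight_comm (r s : ∀ i, ZMod (p i)) :
    couplingWeight p r s = couplingWeight p s r :=
  prod_congr rfl fun i _ => pairWeight_comm p i _ _

theorem sum_couplingWeight (r : ∀ i, ZMod (p i)) :
    ∑ s, couplingWeight p r s = ∏ i, (p i - 1) ^ 2 := by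
  simp_rw [← sum_pairWeight p _ (r _)]
  rw [Fintype.prod_sum]
  rfl

theorem compatibleResidues_of_couplingWeight_ne_zero {r s : ∀ i, ZMod (p i)}
    (h : couplingWeight p r s ≠ 0) : CompatibleResidues p r s := fun i hi =>
  h (prod_eq_zero (mem_univ i) (by simp [pairWeight, hi]))

theorem mul_card_residue_pi_eq_zero (i : ι) :
    p i * #{r : ∀ i, ZMod (p i) | r i = 0} = ∏ i, p i := by
  have := Fintype.card_filter_piFinset_eq (fun i => (univ : Finset (ZMod (p i)))) i 0
  rw [Fintype.piFinset_univ] at this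
  rw [this, if_pos (mem_univ _), ← mul_prod_erase univ p (mem_univ i)]
  simp [ZMod.card]

theorem prod_pairWeight_pow_couplingWeight (i : ι) :
    ∏ x : (∀ i, ZMod (p i)) × (∀ i, ZMod (p i)),
        pairWeight p i (x.1 i) (x.2 i) ^ couplingWeight p x.1 x.2 =
      (p i - 1) ^ (2 * ((∏ j, (p j - 1) ^ 2) * #{r : ∀ i, ZMod (p i) | r i = 0})) *
        (p i - 2) ^ ((∏ j, (p j - 1) ^ 2) * (∏ j, p j) -
          2 * ((∏ j, (p j - 1) ^ 2) * #{r : ∀ i, ZMod (p i) | r i = 0})) := by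
  set D := ∏ j, (p j - 1) ^ 2
  let W := fun x : (∀ i, ZMod (p i)) × (∀ i, ZMod (p i)) => couplingWeight p x.1 x.2
  have hpt : ∀ x : (∀ i, ZMod (p i)) × (∀ i, ZMod (p i)),
      pairWeight p i (x.1 i) (x.2 i) ^ W x =
        (p i - 1) ^ (if x.1 i = 0 then W x else 0) * (p i - 1) ^ (if x.2 i = 0 then W x else 0) *
          (p i - 2) ^ (if x.1 i ≠ 0 ∧ x.2 i ≠ 0 then W x else 0) := by
    intro x
    by_cases h : x.1 i = 0 ∧ x.2 i = 0
    · have : W x = 0 := by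
        by_contra hW
        exact compatibleResidues_of_couplingWeight_ne_zero p hW i h
      simp [this]
    · by_cases h1 : x.1 i = 0 <;> by_cases h2 : x.2 i = 0 <;>
        simp_all [pairWeight]
  have hrow : ∑ x, (if x.1 i = 0 then W x else 0) =
      D * #{r : ∀ i, ZMod (p i) | r i = 0} := by
    rw [Fintype.sum_prod_type, card_filter, mul_sum]
    refine sum_congr rfl fun r _ => ?_
    by_cases h : r i = 0
    · simp [h, W, sum_couplingWeight, D]
    · simp [h]
  have hcol : ∑ x, (if x.2 i = 0 then W x else 0) =
      D * #{r : ∀ i, ZMod (p i) | r i = 0} := by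
    rw [← hrow, ← (Equiv.prodComm _ _).sum_comp]
    refine sum_congr rfl fun x _ => ?_
    simp [W, couplingWeight_comm p x.2]
  have htot : ∑ x, W x = D * ∏ j, p j := by
    rw [Fintype.sum_prod_type]
    simp only [W, sum_couplingWeight, sum_const, card_univ, card_residue_pi, smul_eq_mul]
    ring
  have hsplit : ∑ x, (if x.1 i = 0 then W x else 0) + ∑ x, (if x.2 i = 0 then W x else 0) +
      ∑ x, (if x.1 i ≠ 0 ∧ x.2 i ≠ 0 then W x else 0) = ∑ x, W x := by
    rw [← sum_add_distrib, ← sum_add_distrib]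
    refine sum_congr rfl fun x _ => ?_
    by_cases h : x.1 i = 0 ∧ x.2 i = 0
    · have : W x = 0 := by
        by_contra hW
        exact compatibleResidues_of_couplingWeight_ne_zero p hW i h
      simp [this]
    · by_cases h1 : x.1 i = 0 <;> by_cases h2 : x.2 i = 0 <;> simp_all
  rw [prod_congr rfl fun x _ => hpt x, prod_mul_distrib, prod_mul_distrib, prod_pow_eq_pow_sum,
    prod_pow_eq_pow_sum, prod_pow_eq_pow_sum, hrow, hcol, ← pow_add, two_mul]
  congr 2
  omega

theorem prod_couplingWeight_pow_self :
    ∏ x : (∀ i, ZMod (p i)) × (∀ i, ZMod (p i)),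
        couplingWeight p x.1 x.2 ^ couplingWeight p x.1 x.2 =
      ∏ i, ((p i - 1) ^ (2 * ((∏ j, (p j - 1) ^ 2) * #{r : ∀ i, ZMod (p i) | r i = 0})) *
        (p i - 2) ^ ((∏ j, (p j - 1) ^ 2) * (∏ j, p j) -
          2 * ((∏ j, (p j - 1) ^ 2) * #{r : ∀ i, ZMod (p i) | r i = 0}))) := by
  simp_rw [← prod_pairWeight_pow_couplingWeight]
  rw [prod_comm]
  refine prod_congr rfl fun x _ => ?_
  rw [prod_pow]
  rfl

theorem le_card_compatible_perm_mul (hp : Function.Injective p) (m : ℕ) :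
    (((∏ i, (p i - 1) ^ 2) * m).factorial ^ ∏ i, p i) ^ 2 ≤
      Nat.card {σ : Equiv.Perm (Fin ((∏ i, p i) * ((∏ i, (p i - 1) ^ 2) * m))) // ∀ ℓ,
        CompatibleResidues p (residues p _ ℓ) (residues p _ (σ ℓ))} *
      (m.factorial ^ ((∏ i, (p i - 1) ^ 2) * ∏ i, p i) *
        (∏ i, ((p i - 1) ^ (2 * ((∏ j, (p j - 1) ^ 2) * #{r : ∀ i, ZMod (p i) | r i = 0})) *
          (p i - 2) ^ ((∏ j, (p j - 1) ^ 2) * (∏ j, p j) -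
            2 * ((∏ j, (p j - 1) ^ 2) * #{r : ∀ i, ZMod (p i) | r i = 0})))) ^ m) := by
  set D := ∏ i, (p i - 1) ^ 2 with hD
  have hcard := card_residues_mul p hp (D * m)
  have key := sq_prod_factorial_le_card_perm_mul (residues p ((∏ i, p i) * (D * m)))
    (CompatibleResidues p) (fun r s => m * couplingWeight p r s)
    (fun r => by rw [hcard, ← mul_sum, sum_couplingWeight, mul_comm])
    (fun s => by
      simp_rw [couplingWeight_comm p _ s]
      rw [hcard, ← mul_sum, sum_couplingWeight, mul_comm])
    (fun r s h => compatibleResidues_of_couplingWeight_ne_zero p (right_ne_zero_of_mul h))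
  simp_rw [hcard, prod_const, card_univ, card_residue_pi] at key
  refine key.trans (Nat.mul_le_mul_left _ ?_)
  refine (prod_le_prod' fun x _ => factorial_mul_le m (couplingWeight p x.1 x.2)).trans_eq ?_
  rw [prod_mul_distrib, prod_pow_eq_pow_sum, Fintype.sum_prod_type]
  simp_rw [sum_couplingWeight, sum_const, card_univ, card_residue_pi, smul_eq_mul]
  rw [mul_comm _ D, ← prod_couplingWeight_pow_self, ← prod_pow]
  congr 1
  refine prod_congr rfl fun x _ => ?_
  rw [← pow_mul, mul_comm]

end Residues

theorem kCoprimePermCount_le_add (k a b : ℕ) (τ : Equiv.Perm (Fin b))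
    (hτ : ∀ j : Fin b, Nat.gcd (Nat.gcd (a + j + 1) (a + τ j + 1)) k.factorial = 1) :
    kCoprimePermCount k a ≤ kCoprimePermCount k (a + b) := by
  refine Nat.card_le_card_of_injective (fun σ => ⟨finSumFinEquiv.permCongr
    (Equiv.Perm.sumCongr σ.1 τ), fun ℓ => ?_⟩) ?_
  · obtain ⟨x, rfl⟩ := finSumFinEquiv.surjective ℓ
    rcases x with x | x
    · simpa [Equiv.permCongr_apply] using σ.2 x
    · simpa [Equiv.permCongr_apply] using hτ x
  · intro σ σ₂ h
    have h1 := finSumFinEquiv.permCongr.injective (Subtype.ext_iff.1 h)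
    have h2 := Equiv.Perm.sumCongrHom_injective (a₁ := (σ.1, τ)) (a₂ := (σ₂.1, τ)) h1
    exact Subtype.ext (Prod.ext_iff.1 h2).1

theorem kCoprimePermCount_le_add_two (k a : ℕ) :
    kCoprimePermCount k a ≤ kCoprimePermCount k (a + 2) := by
  refine kCoprimePermCount_le_add k a 2 (Equiv.swap 0 1) fun j => ?_
  have h : Nat.gcd (a + 1) (a + 1 + 1) = 1 := by simp
  fin_cases j
  · simp [h]
  · simp [Nat.gcd_comm (a + 1 + 1), h]

theorem kCoprimePermCount_le_add_one (k a : ℕ) (ha : Nat.gcd (a + 1) k.factorial = 1) :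
    kCoprimePermCount k a ≤ kCoprimePermCount k (a + 1) := by
  refine kCoprimePermCount_le_add k a 1 1 fun j => ?_
  fin_cases j
  simpa using ha

theorem kCoprimePermCount_le_add_of_coprime (k a b : ℕ) (ha : Nat.gcd (a + 1) k.factorial = 1) :
    kCoprimePermCount k a ≤ kCoprimePermCount k (a + b) := by
  induction b using Nat.twoStepInduction with
  | zero => rfl
  | one => exact kCoprimePermCount_le_add_one k a ha
  | more b ih _ => exact ih.trans (kCoprimePermCount_le_add_two k (a + b))

/-- The primes up to `k`. -/
abbrev PrimesUpTo (k : ℕ) : Type := ↥(filter Nat.Prime (range (k + 1)))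

instance (k : ℕ) (i : PrimesUpTo k) : Fact (i : ℕ).Prime :=
  ⟨(mem_filter.1 i.2).2⟩

theorem gcd_factorial_eq_one_iff (k a : ℕ) :
    Nat.gcd a k.factorial = 1 ↔ ∀ i : PrimesUpTo k, ¬(i : ℕ) ∣ a := by
  constructor
  · intro h i hi
    have hk : (i : ℕ) ∣ k.factorial :=
      (Fact.out : (i : ℕ).Prime).dvd_factorial.2 (by simpa using (mem_filter.1 i.2).1)
    exact (Fact.out : (i : ℕ).Prime).one_lt.ne' (Nat.dvd_one.1 ((Nat.dvd_gcd hi hk).trans h.dvd))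
  · intro h
    refine Nat.coprime_of_dvd fun q hq hqa hqk => ?_
    exact h ⟨q, mem_filter.2 ⟨mem_range.2 (Nat.lt_succ_of_le (hq.dvd_factorial.1 hqk)), hq⟩⟩ hqa

theorem kCoprimePermCount_eq (k n : ℕ) :
    kCoprimePermCount k n = Nat.card {σ : Equiv.Perm (Fin n) // ∀ ℓ,
      CompatibleResidues (fun i : PrimesUpTo k => (i : ℕ))
        (residues (fun i : PrimesUpTo k => (i : ℕ)) n ℓ)
        (residues (fun i : PrimesUpTo k => (i : ℕ)) n (σ ℓ))} := by
  refine Nat.card_congr (Equiv.subtypeEquivRight fun σ => forall_congr' fun ℓ => ?_)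
  rw [gcd_factorial_eq_one_iff]
  refine forall_congr' fun i => ?_
  simp only [residues, ZMod.natCast_eq_zero_iff, Nat.dvd_gcd_iff]

/-- The factor of the growth rate at the prime `p`. -/
noncomputable def growthFactor (p : ℕ) : ℝ :=
  ((p : ℝ) - 1) ^ (2 * (1 - 1 / (p : ℝ))) / ((p : ℝ) * ((p : ℝ) - 2) ^ (1 - 2 / (p : ℝ)))

theorem rpow_sub_two_pos {p : ℕ} (hp : 2 ≤ p) : 0 < ((p : ℝ) - 2) ^ (1 - 2 / (p : ℝ)) := by
  rcases hp.eq_or_lt with rfl | h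
  · norm_num
  · have : (2 : ℝ) < p := by exact_mod_cast h
    exact rpow_pos_of_pos (by linarith) _

theorem growthFactor_pos {p : ℕ} (hp : 2 ≤ p) : 0 < growthFactor p := by
  have h2 : (2 : ℝ) ≤ p := by exact_mod_cast hp
  have := rpow_sub_two_pos hp
  have := rpow_pos_of_pos (show 0 < (p : ℝ) - 1 by linarith) (2 * (1 - 1 / (p : ℝ)))
  unfold growthFactor
  positivity

theorem growthFactor_pow_mul {p E T : ℕ} (hp : 2 ≤ p) (hT : p * E = T) :
    (growthFactor p * p) ^ T *
      (((p - 1 : ℕ) : ℝ) ^ (2 * E) * ((p - 2 : ℕ) : ℝ) ^ (T - 2 * E)) =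
        (((p - 1 : ℕ) : ℝ) ^ 2) ^ T := by
  have h2 : (2 : ℝ) ≤ p := by exact_mod_cast hp
  have hE : 2 * E ≤ T := hT ▸ Nat.mul_le_mul_right _ hp
  have hTr : (p : ℝ) * E = T := by exact_mod_cast hT
  rw [Nat.cast_sub hp, Nat.cast_sub (by omega : 1 ≤ p), Nat.cast_one, Nat.cast_ofNat]
  have e1 : (((p : ℝ) - 1) ^ (2 * (1 - 1 / (p : ℝ)))) ^ T = ((p : ℝ) - 1) ^ (2 * T - 2 * E) := by
    rw [← rpow_mul_natCast (by linarith), ← rpow_natCast, Nat.cast_sub (by omega)]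
    congr 1
    push_cast
    rw [← hTr]
    field_simp
  have e2 : (((p : ℝ) - 2) ^ (1 - 2 / (p : ℝ))) ^ T = ((p : ℝ) - 2) ^ (T - 2 * E) := by
    rw [← rpow_mul_natCast (by linarith), ← rpow_natCast, Nat.cast_sub (by omega)]
    congr 1
    push_cast
    rw [← hTr]
    field_simp
  have hpos := pow_pos (rpow_sub_two_pos hp) T
  have hF : growthFactor p * p =
      ((p : ℝ) - 1) ^ (2 * (1 - 1 / (p : ℝ))) / ((p : ℝ) - 2) ^ (1 - 2 / (p : ℝ)) := by
    have := (rpow_sub_two_pos hp).ne'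
    unfold growthFactor
    field_simp
  rw [hF, div_pow, e1, ← e2, div_mul_eq_mul_div, div_eq_iff hpos.ne', ← mul_assoc, ← pow_add,
    ← pow_mul]
  congr 2
  omega

theorem exists_weight_two {n : ℕ} (hn : 2 ≤ n) :
    ∃ w : ℝ, 0 < w ∧ (((2 : ℕ) - 1) * w) ^ (n / 2) * (1 + ((2 : ℕ) - 1) * w) ^ (n - n / 2) ≤
      (4 * n) * (growthFactor 2 * (2 : ℕ)) ^ n * w ^ (n - n / 2) := by
  have hF : growthFactor 2 * (2 : ℕ) = 1 := by norm_num [growthFactor]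
  have hn0 : (0 : ℝ) < n := by positivity
  refine ⟨1 / n, by positivity, ?_⟩
  rw [hF, one_pow, mul_one]
  have h1 : (1 + ((2 : ℕ) - 1) * (1 / n : ℝ)) ^ (n - n / 2) ≤ 4 := by
    have : (1 : ℝ) + ((2 : ℕ) - 1) * (1 / n : ℝ) ≤ exp (1 / n) := by
      have := add_one_le_exp (1 / n : ℝ)
      push_cast
      linarith
    calc _ ≤ exp (1 / n) ^ (n - n / 2) := by
          refine pow_le_pow_left₀ ?_ this _
          push_cast
          have : (0 : ℝ) < 1 / n := by positivity
          linarith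
      _ ≤ exp (1 / n) ^ n := pow_le_pow_right₀ (one_le_exp (by positivity)) (Nat.sub_le _ _)
      _ = exp 1 := by rw [← exp_nat_mul]; congr 1; field_simp
      _ ≤ 4 := by linarith [exp_one_lt_d9]
  have h2 : (((2 : ℕ) - 1) * (1 / n : ℝ)) ^ (n / 2) ≤ n * (1 / n : ℝ) ^ (n - n / 2) := by
    have e : ((2 : ℕ) - 1) * (1 / n : ℝ) = 1 / n := by push_cast; ring
    rw [e]
    have h1n : (1 : ℝ) / n ≤ 1 := by
      rw [div_le_one hn0]; exact_mod_cast (by omega : 1 ≤ n)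
    have hle : (1 / n : ℝ) ^ (n / 2 + 1) ≤ (1 / n : ℝ) ^ (n - n / 2) :=
      pow_le_pow_of_le_one (by positivity) h1n (by omega)
    calc (1 / n : ℝ) ^ (n / 2) = n * (1 / n : ℝ) ^ (n / 2 + 1) := by
          rw [pow_succ]; field_simp
      _ ≤ _ := by gcongr
  calc _ ≤ (n * (1 / n : ℝ) ^ (n - n / 2)) * 4 := by
        refine mul_le_mul h2 h1 ?_ (by positivity)
        push_cast
        have : (0 : ℝ) < 1 / n := by positivity
        refine pow_nonneg ?_ _
        linarith
    _ = _ := by ring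

theorem exists_weight_of_two_lt {p : ℕ} (hp : 2 < p) (n : ℕ) :
    ∃ w : ℝ, 0 < w ∧ ((p - 1) * w) ^ (n / p) * (1 + (p - 1) * w) ^ (n - n / p) ≤
      ((p : ℝ) - 1) ^ 2 * (growthFactor p * p) ^ n * w ^ (n - n / p) := by
  have h3 : (3 : ℝ) ≤ p := by exact_mod_cast hp
  set d := n / p with hd
  have hdn : d ≤ n := Nat.div_le_self _ _
  have hd1 : (d : ℝ) ≤ n / p := Nat.cast_div_le
  have hd2 : (n : ℝ) / p ≤ d + 1 := by
    have := (Nat.lt_floor_add_one ((n : ℝ) / p)).le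
    rwa [Nat.floor_div_eq_div] at this
  obtain ⟨a, ha⟩ : ∃ a : ℝ, a = p - 1 := ⟨_, rfl⟩
  obtain ⟨b, hb⟩ : ∃ b : ℝ, b = p - 2 := ⟨_, rfl⟩
  have ha1 : 1 ≤ a := by linarith
  have hb1 : 1 ≤ b := by linarith
  have ha0 : 0 < a := by linarith
  have hb0 : 0 < b := by linarith
  have hF : (growthFactor p * p) ^ n = a ^ (2 * (n - n / p : ℝ)) / b ^ (n - 2 * (n / p) : ℝ) := by
    have hr := (rpow_sub_two_pos hp.le).ne'
    have : growthFactor p * p = a ^ (2 * (1 - 1 / (p : ℝ))) / b ^ (1 - 2 / (p : ℝ)) := by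
      unfold growthFactor
      rw [← ha, ← hb]
      rw [← hb] at hr
      field_simp
    rw [this, div_pow, ← rpow_mul_natCast ha0.le, ← rpow_mul_natCast hb0.le]
    congr 2 <;> ring
  refine ⟨b / a, by positivity, ?_⟩
  rw [← ha, hF, mul_div_cancel₀ _ ha0.ne', show 1 + b = a by linarith, div_pow,
    show a ^ 2 * (a ^ (2 * (n - n / p : ℝ)) / b ^ (n - 2 * (n / p) : ℝ)) *
      (b ^ (n - d) / a ^ (n - d)) = a ^ 2 * a ^ (2 * (n - n / p : ℝ)) * b ^ (n - d) /
        (b ^ (n - 2 * (n / p) : ℝ) * a ^ (n - d)) by field_simp, le_div_iff₀ (by positivity)]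
  have hA : a ^ (n - d) * a ^ (n - d) ≤ a ^ 2 * a ^ (2 * (n - n / p : ℝ)) := by
    rw [← pow_add, ← rpow_natCast, ← rpow_natCast a 2, ← rpow_add ha0]
    refine rpow_le_rpow_of_exponent_le ha1 ?_
    push_cast [Nat.cast_sub hdn]
    linarith
  have hB : b ^ d * b ^ (n - 2 * (n / p) : ℝ) ≤ b ^ (n - d) := by
    rw [← rpow_natCast, ← rpow_natCast b (n - d), ← rpow_add hb0]
    refine rpow_le_rpow_of_exponent_le hb1 ?_
    push_cast [Nat.cast_sub hdn]
    linarith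
  calc _ = (b ^ d * b ^ (n - 2 * (n / p) : ℝ)) * (a ^ (n - d) * a ^ (n - d)) := by ring
    _ ≤ b ^ (n - d) * (a ^ 2 * a ^ (2 * (n - n / p : ℝ))) := by gcongr
    _ = _ := by ring

theorem exists_weight {p n : ℕ} (hp : 2 ≤ p) (hn : 2 ≤ n) :
    ∃ w : ℝ, 0 < w ∧ ((p - 1) * w) ^ (n / p) * (1 + (p - 1) * w) ^ (n - n / p) ≤
      ((4 * p ^ 2) * n) * (growthFactor p * p) ^ n * w ^ (n - n / p) := by
  have hn1 : (1 : ℝ) ≤ n := by exact_mod_cast (by omega : 1 ≤ n)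
  have hF := growthFactor_pos hp
  rcases hp.eq_or_lt with rfl | h
  · obtain ⟨w, hw, h⟩ := exists_weight_two hn
    refine ⟨w, hw, h.trans ?_⟩
    gcongr
    norm_num
  · obtain ⟨w, hw, h₂⟩ := exists_weight_of_two_lt h n
    refine ⟨w, hw, h₂.trans ?_⟩
    gcongr
    have h3 : (3 : ℝ) ≤ p := by exact_mod_cast h
    nlinarith

theorem factorial_div_pow_mul_le (n P : ℕ) (hP : 0 < P) :
    (n / P + 1).factorial ^ P * P ^ n ≤ n.factorial * ((n + 1) ^ (2 * P) * P ^ P) := by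
  have hle : n / P * P ≤ n := Nat.div_mul_le_self n P
  have hn : n ≤ n / P * P + P := by
    have := Nat.div_add_mod' n P
    have := Nat.mod_lt n hP
    omega
  calc (n / P + 1).factorial ^ P * P ^ n
      ≤ ((n + 1) ^ P * (n / P).factorial ^ P) * (P ^ (n / P * P) * P ^ P) := by
        rw [Nat.factorial_succ, mul_pow, ← pow_add]
        gcongr
        exact Nat.div_le_self n P
    _ = (n + 1) ^ P * ((n / P).factorial ^ P * P ^ (n / P * P)) * P ^ P := by ring
    _ ≤ (n + 1) ^ P * (n.factorial * (n + 1) ^ P) * P ^ P := by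
        gcongr (n + 1) ^ P * ?_ * P ^ P
        refine (factorial_pow_mul_le _ _).trans ?_
        gcongr
    _ = _ := by ring

theorem two_le_primesUpTo {k : ℕ} (i : PrimesUpTo k) : 2 ≤ (i : ℕ) :=
  (Fact.out : (i : ℕ).Prime).two_le

theorem kCoprimePermCount_le (k : ℕ) {n : ℕ} (hn : 2 ≤ n) :
    (kCoprimePermCount k n : ℝ) ≤
      (n.factorial * (∏ i : PrimesUpTo k, growthFactor i) ^ n) *
        (((n + 1) ^ (2 * ∏ i : PrimesUpTo k, (i : ℕ)) *
          (∏ i : PrimesUpTo k, (i : ℕ) : ℕ) ^ (∏ i : PrimesUpTo k, (i : ℕ))) *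
            ∏ i : PrimesUpTo k, (4 * (i : ℝ) ^ 2 * n)) := by
  choose w hw hwle using fun i : PrimesUpTo k => exists_weight (two_le_primesUpTo i) hn
  have key := card_compatible_perm_mul_le (fun i : PrimesUpTo k => (i : ℕ))
    Subtype.val_injective n w fun i => (hw i).le
  rw [← kCoprimePermCount_eq] at key
  set P := ∏ i : PrimesUpTo k, (i : ℕ) with hP
  have hP0 : 0 < P := prod_pos fun i _ => (Fact.out : (i : ℕ).Prime).pos
  have hW : 0 < ∏ i, w i ^ (n - n / i) := prod_pos fun i _ => pow_pos (hw i) _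
  have hF : 0 < ∏ i : PrimesUpTo k, growthFactor i :=
    prod_pos fun i _ => growthFactor_pos (two_le_primesUpTo i)
  refine le_of_mul_le_mul_right (key.trans ?_) hW
  have h1 : ∏ i, (((i - 1) * w i) ^ (n / i) * (1 + (i - 1) * w i) ^ (n - n / i)) ≤
      (∏ i : PrimesUpTo k, (4 * (i : ℝ) ^ 2 * n)) *
        ((∏ i : PrimesUpTo k, growthFactor i) ^ n * (P : ℝ) ^ n) * ∏ i, w i ^ (n - n / i) := by
    refine (prod_le_prod (fun i _ => ?_) fun i _ => hwle i).trans_eq ?_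
    · have : (2 : ℝ) ≤ i := by exact_mod_cast two_le_primesUpTo i
      have := mul_pos (show (0 : ℝ) < i - 1 by linarith) (hw i)
      positivity
    · rw [prod_mul_distrib, prod_mul_distrib, prod_pow,
        prod_mul_distrib (f := fun i : PrimesUpTo k => growthFactor i), mul_pow, hP, Nat.cast_prod]
  have h2 : ((n / P + 1).factorial : ℝ) ^ P * (P : ℝ) ^ n ≤
      n.factorial * ((n + 1) ^ (2 * P) * (P : ℝ) ^ P) := by
    exact_mod_cast factorial_div_pow_mul_le n P hP0
  calc _ ≤ ((n / P + 1).factorial : ℝ) ^ P * _ := mul_le_mul_of_nonneg_left h1 (by positivity)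
    _ = (((n / P + 1).factorial : ℝ) ^ P * (P : ℝ) ^ n) *
        ((∏ i : PrimesUpTo k, (4 * (i : ℝ) ^ 2 * n)) *
        (∏ i : PrimesUpTo k, growthFactor i) ^ n * ∏ i, w i ^ (n - n / i)) := by ring
    _ ≤ (n.factorial * ((n + 1) ^ (2 * P) * (P : ℝ) ^ P)) *
        ((∏ i : PrimesUpTo k, (4 * (i : ℝ) ^ 2 * n)) *
        (∏ i : PrimesUpTo k, growthFactor i) ^ n * ∏ i, w i ^ (n - n / i)) := by
        refine mul_le_mul_of_nonneg_right h2 ?_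
        positivity
    _ = _ := by ring

theorem exists_le_kCoprimePermCount_mul (k : ℕ) :
    ∃ T : ℕ, 0 < T ∧ (∀ i : PrimesUpTo k, (i : ℕ) ∣ T) ∧ ∀ m : ℕ,
      ((T * m).factorial : ℝ) * (∏ i : PrimesUpTo k, growthFactor i) ^ (T * m) ≤
        kCoprimePermCount k (T * m) * ((T * m : ℕ) + 1) ^ (2 * T) := by
  let p := fun i : PrimesUpTo k => (i : ℕ)
  obtain ⟨P, hP⟩ : ∃ P, P = ∏ i, p i := ⟨_, rfl⟩
  obtain ⟨D, hD⟩ : ∃ D, D = ∏ i, (p i - 1) ^ 2 := ⟨_, rfl⟩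
  have hP0 : 0 < P := hP ▸ prod_pos fun i _ => (Fact.out : (i : ℕ).Prime).pos
  have hD0 : 0 < D := hD ▸ prod_pos fun i _ => pow_pos (Nat.sub_pos_of_lt (two_le_primesUpTo i)) 2
  refine ⟨P * D, by positivity, fun i => hP ▸ (dvd_prod_of_mem p (mem_univ i)).mul_right D,
    fun m => ?_⟩
  have key := le_card_compatible_perm_mul p Subtype.val_injective m
  rw [← kCoprimePermCount_eq, ← hD, ← hP, show P * (D * m) = P * D * m from (mul_assoc P D m).symm] at key
  obtain ⟨V, hV⟩ : ∃ V, V = ∏ i, ((p i - 1) ^ (2 * (D * #{r : ∀ i, ZMod (p i) | r i = 0})) *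
    (p i - 2) ^ (D * P - 2 * (D * #{r : ∀ i, ZMod (p i) | r i = 0}))) := ⟨_, rfl⟩
  rw [← hV] at key
  obtain ⟨F, hF⟩ : ∃ F, F = ∏ i : PrimesUpTo k, growthFactor i := ⟨_, rfl⟩
  rw [← hF]
  have hF0 : 0 < F :=
    hF ▸ prod_pos fun i _ => growthFactor_pos (two_le_primesUpTo i)
  have hFV : (F * P) ^ (D * P) * V = (D : ℝ) ^ (D * P) := by
    rw [hF, hP, hV, hD, Nat.cast_prod, Nat.cast_prod, Nat.cast_prod, ← hD, ← hP,
      ← prod_mul_distrib, ← prod_pow, ← prod_mul_distrib, ← prod_pow]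
    refine prod_congr rfl fun i _ => ?_
    push_cast
    refine growthFactor_pow_mul (two_le_primesUpTo i) ?_
    rw [hP, ← mul_card_residue_pi_eq_zero p i]
    ring
  have hV0 : (0 : ℝ) < V := by
    have h : (0 : ℝ) < (F * P) ^ (D * P) * V := by rw [hFV]; positivity
    exact pos_of_mul_pos_right h (by positivity)
  have h1 : ((m * (D * P)).factorial : ℝ) ≤ m.factorial ^ (D * P) * (D * P : ℝ) ^ (m * (D * P)) := by
    exact_mod_cast factorial_mul_le m (D * P)
  have h2 : (m.factorial : ℝ) ^ (2 * (D * P)) * (D : ℝ) ^ (2 * m * (D * P)) ≤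
      ((D * m).factorial ^ P) ^ 2 * ((P * D * m : ℕ) + 1) ^ (2 * (P * D)) := by
    have h := Nat.pow_le_pow_left (factorial_pow_mul_le m D) (2 * P)
    have h₂ : (m * D + 1) ^ D ≤ (P * D * m + 1) ^ D := by
      refine Nat.pow_le_pow_left ?_ _
      have := Nat.le_mul_of_pos_left (m * D) hP0
      nlinarith
    have h_main : (m.factorial ^ D * D ^ (m * D)) ^ (2 * P) ≤
        ((m * D).factorial * (P * D * m + 1) ^ D) ^ (2 * P) :=
      h.trans (Nat.pow_le_pow_left (Nat.mul_le_mul_left _ h₂) _)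
    have e1 : (m.factorial ^ D * D ^ (m * D)) ^ (2 * P) =
        m.factorial ^ (2 * (D * P)) * D ^ (2 * m * (D * P)) := by
      rw [mul_pow, ← pow_mul, ← pow_mul]; congr 2 <;> ring
    have e2 : ((m * D).factorial * (P * D * m + 1) ^ D) ^ (2 * P) =
        ((D * m).factorial ^ P) ^ 2 * (P * D * m + 1) ^ (2 * (P * D)) := by
      rw [mul_pow, ← pow_mul, ← pow_mul, mul_comm m D]; congr 2 <;> ring
    rw [e1, e2] at h_main
    exact_mod_cast h_main
  have h3 : (((D * m).factorial : ℝ) ^ P) ^ 2 ≤ kCoprimePermCount k (P * D * m) *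
      (m.factorial ^ (D * P) * V ^ m) := by
    exact_mod_cast key
  have hm : (0 : ℝ) < m.factorial ^ (D * P) * V ^ m := by positivity
  refine le_of_mul_le_mul_right ?_ hm
  calc ((P * D * m).factorial : ℝ) * F ^ (P * D * m) * (m.factorial ^ (D * P) * V ^ m)
      ≤ (m.factorial ^ (D * P) * (D * P : ℝ) ^ (m * (D * P))) * F ^ (P * D * m) *
          (m.factorial ^ (D * P) * V ^ m) := by
        rw [show P * D * m = m * (D * P) by ring]
        gcongr
    _ = m.factorial ^ (2 * (D * P)) * (D : ℝ) ^ (m * (D * P)) * ((F * P) ^ (D * P) * V) ^ m := by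
        rw [show P * D * m = m * (D * P) by ring]
        simp only [mul_pow, ← pow_mul]
        ring
    _ = m.factorial ^ (2 * (D * P)) * (D : ℝ) ^ (2 * m * (D * P)) := by
        rw [hFV, ← pow_mul, mul_assoc, ← pow_add]
        congr 2
        ring
    _ ≤ _ := h2
    _ ≤ (kCoprimePermCount k (P * D * m) * (m.factorial ^ (D * P) * V ^ m)) *
        ((P * D * m : ℕ) + 1) ^ (2 * (P * D)) := by gcongr
    _ = _ := by ring

theorem exists_le_kCoprimePermCount (k : ℕ) :
    ∃ T : ℕ, ∀ n : ℕ, 2 ≤ n →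
      (n.factorial : ℝ) * (∏ i : PrimesUpTo k, growthFactor i) ^ n ≤
        kCoprimePermCount k n *
          (max 1 (∏ i : PrimesUpTo k, growthFactor i) ^ T * (n + 1) ^ (3 * T)) := by
  obtain ⟨T, hT0, hdvd, h⟩ := exists_le_kCoprimePermCount_mul k
  refine ⟨T, fun n hn => ?_⟩
  set F := ∏ i : PrimesUpTo k, growthFactor i with hF
  have hF0 : 0 < F := prod_pos fun i _ => growthFactor_pos (two_le_primesUpTo i)
  obtain ⟨m, j, hj, rfl⟩ : ∃ m j, j < T ∧ n = T * m + j :=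
    ⟨n / T, n % T, Nat.mod_lt _ hT0, (Nat.div_add_mod n T).symm⟩
  have hmono : kCoprimePermCount k (T * m) ≤ kCoprimePermCount k (T * m + j) := by
    refine kCoprimePermCount_le_add_of_coprime k _ _ ((gcd_factorial_eq_one_iff k _).2 fun i hi => ?_)
    rw [Nat.dvd_add_right ((hdvd i).mul_right m)] at hi
    exact (Fact.out : (i : ℕ).Prime).one_lt.ne' (Nat.dvd_one.1 hi)
  set n := T * m + j with hn_eq
  have hfac : (n.factorial : ℝ) ≤ (T * m).factorial * (n + 1) ^ T := by
    have h1 : n.factorial ≤ (T * m).factorial * n ^ j := by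
      rw [hn_eq, ← Nat.factorial_mul_ascFactorial]
      exact Nat.mul_le_mul_left _ (Nat.ascFactorial_le_pow_add _ _)
    have h2 : n ^ j ≤ (n + 1) ^ T :=
      (Nat.pow_le_pow_left n.le_succ j).trans (Nat.pow_le_pow_right n.succ_pos hj.le)
    exact_mod_cast h1.trans (Nat.mul_le_mul_left _ h2)
  have hFn : F ^ n ≤ F ^ (T * m) * max 1 F ^ T := by
    rw [hn_eq, pow_add]
    gcongr
    exact (pow_le_pow_left₀ hF0.le (le_max_right 1 F) j).trans
      (pow_le_pow_right₀ (le_max_left 1 F) hj.le)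
  have hTm : ((T * m : ℕ) : ℝ) ≤ n := by exact_mod_cast Nat.le_add_right _ _
  calc (n.factorial : ℝ) * F ^ n
      ≤ ((T * m).factorial * (n + 1) ^ T) * (F ^ (T * m) * max 1 F ^ T) := by gcongr
    _ = ((T * m).factorial * F ^ (T * m)) * ((n + 1) ^ T * max 1 F ^ T) := by ring
    _ ≤ (kCoprimePermCount k (T * m) * ((T * m : ℕ) + 1) ^ (2 * T)) *
        ((n + 1) ^ T * max 1 F ^ T) := by
        gcongr ?_ * _
        exact h m
    _ ≤ (kCoprimePermCount k n * (n + 1) ^ (2 * T)) * ((n + 1) ^ T * max 1 F ^ T) := by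
        gcongr
    _ = _ := by ring

theorem exists_const_mul_pow_le_exp (c : ℝ) (N : ℕ) :
    ∃ K₀ : ℝ, ∀ K : ℝ, K₀ ≤ K → ∀ n : ℕ, 2 ≤ n → c * ((n : ℝ) + 1) ^ N ≤ exp (K * log n) := by
  have hl2 : 0 < log 2 := log_pos one_lt_two
  refine ⟨|c| / log 2 + 2 * N, fun K hK n hn => ?_⟩
  have hn2 : (2 : ℝ) ≤ n := by exact_mod_cast hn
  have hlog : log 2 ≤ log n := log_le_log two_pos hn2
  have h1 : c ≤ exp (|c| / log 2 * log n) := by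
    have : |c| ≤ |c| / log 2 * log n := by
      rw [div_mul_eq_mul_div, le_div_iff₀ hl2]
      gcongr
    linarith [add_one_le_exp (|c| / log 2 * log n), le_abs_self c]
  have h2 : ((n : ℝ) + 1) ^ N ≤ exp (2 * N * log n) := by
    rw [show 2 * N * log n = ((2 * N : ℕ) : ℝ) * log n by push_cast; ring, exp_nat_mul,
      exp_log (by linarith), pow_mul]
    gcongr
    nlinarith
  calc c * ((n : ℝ) + 1) ^ N ≤ exp (|c| / log 2 * log n) * exp (2 * N * log n) := by gcongr
    _ = exp ((|c| / log 2 + 2 * N) * log n) := by rw [← exp_add]; ring_nf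
    _ ≤ _ := by gcongr

/-- For fixed `k ≥ 2`,
`C_k(n) = n!·(∏_{p ≤ k} (p−1)^{2(1−1/p)}/(p·(p−2)^{1−2/p}))^n · exp(O(log n))`,
with the factor at `p = 2` interpreted as `1/2` (real powers, `(0:ℝ)^(0:ℝ) = 1`). -/
theorem kCoprimePermCount_asymptotic :
    ∀ k : ℕ, 2 ≤ k → ∃ K : ℝ, 0 < K ∧ ∀ n : ℕ, 2 ≤ n →
      (n.factorial : ℝ) *
          (∏ p ∈ Finset.filter Nat.Prime (Finset.range (k + 1)),
            ((p : ℝ) - 1) ^ (2 * (1 - 1 / (p : ℝ))) /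
              ((p : ℝ) * ((p : ℝ) - 2) ^ (1 - 2 / (p : ℝ)))) ^ n *
          Real.exp (-K * Real.log n)
        ≤ (kCoprimePermCount k n : ℝ) ∧
      (kCoprimePermCount k n : ℝ) ≤
        (n.factorial : ℝ) *
          (∏ p ∈ Finset.filter Nat.Prime (Finset.range (k + 1)),
            ((p : ℝ) - 1) ^ (2 * (1 - 1 / (p : ℝ))) /
              ((p : ℝ) * ((p : ℝ) - 2) ^ (1 - 2 / (p : ℝ)))) ^ n *
          Real.exp (K * Real.log n) := by
  intro k _
  have hF : ∏ p ∈ Finset.filter Nat.Prime (Finset.range (k + 1)),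
      ((p : ℝ) - 1) ^ (2 * (1 - 1 / (p : ℝ))) / ((p : ℝ) * ((p : ℝ) - 2) ^ (1 - 2 / (p : ℝ))) =
        ∏ i : PrimesUpTo k, growthFactor i :=
    (prod_coe_sort (Finset.filter Nat.Prime (Finset.range (k + 1))) growthFactor).symm
  rw [hF]
  have hF0 : 0 < ∏ i : PrimesUpTo k, growthFactor i :=
    prod_pos fun i _ => growthFactor_pos (two_le_primesUpTo i)
  obtain ⟨T, hT⟩ := exists_le_kCoprimePermCount k
  set P := ∏ i : PrimesUpTo k, (i : ℕ)
  set c := ∏ i : PrimesUpTo k, (4 * (i : ℝ) ^ 2) with hc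
  obtain ⟨K₁, hK₁⟩ := exists_const_mul_pow_le_exp
    (max 1 (∏ i : PrimesUpTo k, growthFactor i) ^ T) (3 * T)
  obtain ⟨K₂, hK₂⟩ := exists_const_mul_pow_le_exp ((P : ℝ) ^ P * c)
    (2 * P + Fintype.card (PrimesUpTo k))
  refine ⟨max 1 (max K₁ K₂), by positivity, fun n hn => ⟨?_, ?_⟩⟩
  · have h := hK₁ (max 1 (max K₁ K₂)) (by simp) n hn
    rw [neg_mul, exp_neg, ← div_eq_mul_inv, div_le_iff₀ (exp_pos _)]
    exact (hT n hn).trans (mul_le_mul_of_nonneg_left h (Nat.cast_nonneg _))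
  · have h := hK₂ (max 1 (max K₁ K₂)) (by simp) n hn
    refine (kCoprimePermCount_le k hn).trans (mul_le_mul_of_nonneg_left (le_trans ?_ h) ?_)
    · rw [prod_mul_distrib, prod_const, card_univ, ← hc, pow_add]
      have hc0 : 0 ≤ c := prod_nonneg fun i _ => by positivity
      calc ((n : ℝ) + 1) ^ (2 * P) * (P : ℝ) ^ P * (c * (n : ℝ) ^ Fintype.card (PrimesUpTo k))
          ≤ ((n : ℝ) + 1) ^ (2 * P) * (P : ℝ) ^ P *
            (c * ((n : ℝ) + 1) ^ Fintype.card (PrimesUpTo k)) := by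
            gcongr
            linarith
        _ = _ := by ring
    · positivity
end
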